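/- arXiv:2509.02823 — 3 statements merged into one kernel-verified Lean document; each statement's English description precedes it below -/
import Mathlib

section
/- Szemerédi–Trotter over characteristic-zero fields: there is an absolute constant C such that for any field K of characteristic zero, any finite set P of m points in K² and any finite set L of n lines in K², the number of incidences I(P, L) = #{(p, l) ∈ P × L : p ∈ l} is at most C(m^{2/3} n^{2/3} + m + n). -/
open scoped Classical

/-- A line in the plane `E²` is the zero set of a nontrivial affine equation. -/
def IsLine (E : Type) [Field E] (S : Set (E × E)) : Prop :=
  ∃ a b c : E, (a, b) ≠ (0, 0) ∧ S = {p : E × E | a * p.1 + b * p.2 + c = 0}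

/- Suppose the lines of `A` are flat and those of `B` steep. At a point `p` rich for both, link a
line `a` of `A` to the lines of `B` through points closer to `p` than the other points on `a`. Two
points of `a` linked to the same `b` are farther apart than they are from `a ∩ b`, so a kissing
number bounds the number of links along each pair `(a, b)`. If `p` has few links, then its nearest
neighbours along its flat lines fill a flat cone, those along its steep lines a steep cone, and
there is no room for both. A covering argument finds two separated sets of slopes in any set of
lines, and induction on the lines then bounds the number of rich points. This works over any
finite-dimensional normed extension of `ℝ`, hence over `ℂ`, and the coordinates of a finite
configuration in characteristic zero generate a field that embeds into `ℂ`. -/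

open Module NormedSpace

section Packing

variable {E : Type*} [NormedAddCommGroup E] [NormedSpace ℝ E]

lemma norm_sub_le_of_norm_normalize_sub_lt_one {a b : E} (hab : ‖a‖ ≤ ‖b‖)
    (h : ‖normalize b - normalize a‖ < 1) : ‖b - a‖ ≤ ‖b‖ := by
  have hdecomp : b - a = (‖b‖ - ‖a‖) • normalize b + ‖a‖ • (normalize b - normalize a) := by
    rw [sub_smul, smul_sub, norm_smul_normalize, norm_smul_normalize]
    abel
  have hunit : ‖normalize b‖ ≤ 1 := by
    rcases eq_or_ne b 0 with rfl | hb
    · simp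
    · exact (norm_normalize_eq_one_iff.2 hb).le
  calc ‖b - a‖ ≤ (‖b‖ - ‖a‖) * ‖normalize b‖ + ‖a‖ * ‖normalize b - normalize a‖ := by
        rw [hdecomp]
        refine (norm_add_le _ _).trans_eq ?_
        rw [norm_smul, norm_smul, norm_norm, Real.norm_of_nonneg (sub_nonneg.2 hab)]
    _ ≤ (‖b‖ - ‖a‖) * 1 + ‖a‖ * 1 :=
        add_le_add (mul_le_mul_of_nonneg_left hunit (sub_nonneg.2 hab))
          (mul_le_mul_of_nonneg_left h.le (norm_nonneg a))
    _ = ‖b‖ := by ring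

variable [FiniteDimensional ℝ E]

lemma card_le_of_norm_sub_lt (S : Finset E) (z : E)
    (h : ∀ a ∈ S, ∀ b ∈ S, a ≠ b → ‖a - z‖ < ‖a - b‖) : S.card ≤ 5 ^ finrank ℝ E := by
  let u : E → E := fun a => normalize (a - z)
  have hsep : ∀ a ∈ S, ∀ b ∈ S, a ≠ b → 1 ≤ ‖u a - u b‖ := by
    have hle : ∀ a ∈ S, ∀ b ∈ S, a ≠ b → ‖b - z‖ ≤ ‖a - z‖ → 1 ≤ ‖u a - u b‖ := by
      intro a ha b hb hab hba
      by_contra! hlt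
      have := norm_sub_le_of_norm_normalize_sub_lt_one hba hlt
      rw [sub_sub_sub_cancel_right] at this
      exact (h a ha b hb hab).not_ge this
    intro a ha b hb hab
    rcases le_total ‖b - z‖ ‖a - z‖ with hba | hba
    · exact hle a ha b hb hab hba
    · exact norm_sub_rev (u a) (u b) ▸ hle b hb a ha hab.symm hba
  have hinj : Set.InjOn u S := by
    intro a ha b hb hab
    by_contra hne
    have := hsep a ha b hb hne
    norm_num [hab] at this
  rw [← Finset.card_image_of_injOn hinj]
  refine Besicovitch.card_le_of_separated _ ?_ ?_
  · simp only [Finset.forall_mem_image]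
    intro a _
    rcases eq_or_ne (a - z) 0 with ha | ha
    · simp [u, ha]
    · simp [u, norm_normalize_eq_one_iff.2 ha]
  · simp only [Finset.forall_mem_image]
    exact fun a ha b hb hne => hsep a ha b hb fun hab => hne (congrArg u hab)

lemma exists_card_le_mul_of_card_ball_le (K : ℝ) :
    ∃ D : ℕ, ∀ {ι : Type*} (T : Finset ι) (g : ι → E) (c : E) (r x : ℝ), 0 < r → 0 < x →
      (∀ i ∈ T, ‖g i - c‖ ≤ K * r) →
      (∀ i ∈ T, (T.filter fun j => ‖g j - g i‖ < r).card ≤ x) → T.card ≤ D * x := by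
  obtain ⟨N, -, hNfin, hN⟩ := finite_cover_balls_of_compact
    (isCompact_closedBall (0 : E) K) one_half_pos
  lift N to Finset E using hNfin
  refine ⟨N.card, fun T g c r x hr hx₀ hT hx => ?_⟩
  have hnet : ∀ i ∈ T, ∃ y ∈ N, dist (r⁻¹ • (g i - c)) y < 1 / 2 := by
    intro i hi
    have hmem : r⁻¹ • (g i - c) ∈ Metric.closedBall (0 : E) K := by
      rw [mem_closedBall_zero_iff, norm_smul, norm_inv, Real.norm_of_nonneg hr.le,
        inv_mul_le_iff₀ hr, mul_comm]
      exact hT i hi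
    simpa using hN hmem
  choose! f hfN hf using hnet
  by_contra! hlt
  obtain ⟨y, -, hy⟩ := Finset.exists_lt_card_fiber_of_nsmul_lt_card_of_maps_to (b := x) hfN
    (by rwa [nsmul_eq_mul])
  obtain ⟨i, hi⟩ := Finset.card_pos.1 (Nat.cast_pos.1 (hx₀.trans hy))
  rw [Finset.mem_filter] at hi
  refine (hx i hi.1).not_gt (hy.trans_le (Nat.cast_le.2 (Finset.card_le_card fun j hj => ?_)))
  rw [Finset.mem_filter] at hj ⊢
  refine ⟨hj.1, ?_⟩
  have hsmall : ‖r⁻¹ • (g j - g i)‖ < 1 := by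
    have hji := (dist_triangle_right _ _ y).trans_lt
      (add_lt_add (hj.2 ▸ hf j hj.1) (hi.2 ▸ hf i hi.1))
    rwa [dist_eq_norm, ← smul_sub, sub_sub_sub_cancel_right, add_halves] at hji
  rwa [norm_smul, norm_inv, Real.norm_of_nonneg hr.le, inv_mul_lt_iff₀ hr, mul_one] at hsmall

/- Take `r` minimal such that a closed ball of radius `r` around some `g i` contains `x` points:
then open balls of radius `r` around points of `g` contain fewer than `x` points. -/
lemma exists_le_card_fiber_or_ball (K : ℝ) :
    ∃ D : ℕ, ∀ {ι : Type*} (T : Finset ι) (g : ι → E) (x : ℝ), 0 < x → x ≤ T.card →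
      ∃ c : E, x ≤ (T.filter fun i => g i = c).card ∨
        ∃ r > 0, x ≤ (T.filter fun i => ‖g i - c‖ ≤ r).card ∧
          (T.filter fun i => ‖g i - c‖ ≤ K * r).card ≤ D * x := by
  obtain ⟨D, hD⟩ := exists_card_le_mul_of_card_ball_le (E := E) K
  refine ⟨D, fun T g x hx hxT => ?_⟩
  let full := (T ×ˢ T).filter fun e =>
    x ≤ (T.filter fun k => ‖g k - g e.1‖ ≤ ‖g e.2 - g e.1‖).card
  have hfull : full.Nonempty := by
    obtain ⟨i, hi⟩ := Finset.card_pos.1 (Nat.cast_pos.1 (hx.trans_le hxT))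
    obtain ⟨j, hj, hmax⟩ := Finset.exists_max_image T (fun k => ‖g k - g i‖) ⟨i, hi⟩
    refine ⟨(i, j), Finset.mem_filter.2 ⟨Finset.mk_mem_product hi hj, ?_⟩⟩
    rwa [Finset.filter_true_of_mem hmax]
  obtain ⟨⟨i, j⟩, hij, hmin⟩ :=
    Finset.exists_min_image full (fun e => ‖g e.2 - g e.1‖) hfull
  simp only [full, Finset.mem_filter, Finset.mem_product, and_imp, Prod.forall] at hij hmin
  refine ⟨g i, ?_⟩
  rcases (norm_nonneg (g j - g i)).eq_or_lt with hzero | hpos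
  · left
    simpa [← hzero, sub_eq_zero] using hij.2
  refine Or.inr ⟨‖g j - g i‖, hpos, hij.2, ?_⟩
  refine hD _ g (g i) _ x hpos hx (fun k hk => (Finset.mem_filter.1 hk).2) fun k hk => ?_
  refine (Nat.cast_le.2 (Finset.card_le_card
    (Finset.filter_subset_filter _ (Finset.filter_subset _ _)))).trans ?_
  by_contra! hlt
  have hk := (Finset.mem_filter.1 hk).1
  set near := T.filter fun l => ‖g l - g k‖ < ‖g j - g i‖
  obtain ⟨l, hl, hmax⟩ := Finset.exists_max_image near (fun l => ‖g l - g k‖)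
    (Finset.card_pos.1 (Nat.cast_pos.1 (hx.trans hlt)))
  have hl := Finset.mem_filter.1 hl
  refine (hmin k l hk hl.1 (hlt.le.trans (Nat.cast_le.2
    (Finset.card_le_card fun m hm => ?_)))).not_gt hl.2
  exact Finset.mem_filter.2 ⟨(Finset.mem_filter.1 hm).1, hmax m hm⟩

end Packing

lemma sq_card_sdiff_le {α : Type*} [DecidableEq α] {A L : Finset α} (hA : A ⊆ L) {ε : ℝ}
    (hcard : ε * L.card ≤ A.card) : ((L \ A).card : ℝ) ^ 2 ≤ ((1 - ε) * L.card) ^ 2 := by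
  rw [Finset.cast_card_sdiff hA]
  have := (Nat.cast_le (α := ℝ)).2 (Finset.card_le_card hA)
  exact pow_le_pow_left₀ (by linarith) (by linarith) 2

lemma sum_card_le_card_biUnion_add_sq {α β : Type*} [DecidableEq β] (S : Finset α)
    (F : α → Finset β) (h : ∀ p ∈ S, ∀ q ∈ S, p ≠ q → (F p ∩ F q).card ≤ 1) :
    ∑ p ∈ S, (F p).card ≤ (S.biUnion F).card + S.card ^ 2 := by
  induction S using Finset.induction_on with
  | empty => simp
  | insert a S ha ih =>
    have hS : ∑ p ∈ S, (F p).card ≤ (S.biUnion F).card + S.card ^ 2 :=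
      ih fun p hp q hq => h p (Finset.mem_insert_of_mem hp) q (Finset.mem_insert_of_mem hq)
    have hinter : (F a ∩ S.biUnion F).card ≤ S.card := by
      rw [Finset.inter_biUnion, ← mul_one S.card]
      refine Finset.card_biUnion_le_card_mul _ _ _ fun q hq => ?_
      exact h a (Finset.mem_insert_self a S) q (Finset.mem_insert_of_mem hq)
        fun haq => ha (haq ▸ hq)
    have hunion := Finset.card_union_add_card_inter (F a) (S.biUnion F)
    rw [Finset.sum_insert ha, Finset.biUnion_insert, Finset.card_insert_of_notMem ha]
    nlinarith

section Lines

variable {K : Type*} [Field K]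

/-- Incidence of the point `p` with the non-vertical line of slope `a.1` and intercept `a.2`.
All non-vertical lines are encoded by such pairs. -/
def OnLine (p a : K × K) : Prop := p.2 = a.1 * p.1 + a.2

/-- The lines of `L` through the point `p`; a point is called rich if there are many of them. -/
noncomputable def linesThrough (L : Finset (K × K)) (p : K × K) : Finset (K × K) :=
  L.filter (OnLine p)

lemma mem_linesThrough {L : Finset (K × K)} {p a : K × K} :
    a ∈ linesThrough L p ↔ a ∈ L ∧ OnLine p a := Finset.mem_filter

lemma linesThrough_subset (L : Finset (K × K)) (p : K × K) : linesThrough L p ⊆ L :=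
  Finset.filter_subset _ _

lemma linesThrough_mono {L L' : Finset (K × K)} (h : L ⊆ L') (p : K × K) :
    linesThrough L p ⊆ linesThrough L' p := Finset.filter_subset_filter _ h

lemma OnLine.point_ext {p q a : K × K} (hp : OnLine p a) (hq : OnLine q a) (h : p.1 = q.1) :
    p = q := Prod.ext h (by rw [hp, hq, h])

lemma OnLine.line_ext {p a b : K × K} (ha : OnLine p a) (hb : OnLine p b) (h : a.1 = b.1) :
    a = b := by
  unfold OnLine at ha hb
  exact Prod.ext h (by rw [h] at ha; exact add_left_cancel (ha.symm.trans hb))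

lemma OnLine.line_unique {p q a b : K × K} (hpq : p ≠ q) (hpa : OnLine p a) (hqa : OnLine q a)
    (hpb : OnLine p b) (hqb : OnLine q b) : a = b := by
  have hx : p.1 - q.1 ≠ 0 := sub_ne_zero.2 fun h => hpq (hpa.point_ext hqa h)
  refine hpa.line_ext hpb (mul_right_cancel₀ hx ?_)
  unfold OnLine at hpa hqa hpb hqb
  linear_combination hqa - hpa + hpb - hqb

lemma setOf_onLine_injective : Function.Injective fun a : K × K => {p | OnLine p a} := by
  intro a b h
  have hmem : ∀ x, OnLine (x, a.1 * x + a.2) b := fun x => (Set.ext_iff.1 h _).1 rfl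
  exact OnLine.line_unique (p := (0, a.1 * 0 + a.2)) (q := (1, a.1 * 1 + a.2))
    (fun h => zero_ne_one (congrArg Prod.fst h)) rfl rfl (hmem 0) (hmem 1)

lemma card_linesThrough_le_one {A : Finset (K × K)} {c : K} (hA : ∀ a ∈ A, a.1 = c) (p : K × K) :
    (linesThrough A p).card ≤ 1 := by
  refine Finset.card_le_one.2 fun a ha b hb => ?_
  rw [mem_linesThrough] at ha hb
  exact ha.2.line_ext hb.2 ((hA a ha.1).trans (hA b hb.1).symm)

lemma card_linesThrough_inter_le_one (L : Finset (K × K)) {p q : K × K} (hpq : p ≠ q) :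
    (linesThrough L p ∩ linesThrough L q).card ≤ 1 := by
  refine Finset.card_le_one.2 fun a ha b hb => ?_
  simp only [Finset.mem_inter, mem_linesThrough] at ha hb
  exact OnLine.line_unique hpq ha.1.2 ha.2.2 hb.1.2 hb.2.2

lemma card_linesThrough_sdiff_add {A L : Finset (K × K)} (hA : A ⊆ L) (p : K × K) :
    (linesThrough (L \ A) p).card + (linesThrough A p).card = (linesThrough L p).card := by
  have hsdiff : linesThrough (L \ A) p = linesThrough L p \ linesThrough A p := by
    ext a
    simp only [mem_linesThrough, Finset.mem_sdiff]
    tauto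
  rw [hsdiff, Finset.card_sdiff_add_card_eq_card (linesThrough_mono hA p)]

lemma card_linesThrough_le_of_onLine_imp {F : Type*} [Field F] {A : Finset (K × K)}
    {f : K × K → F × F} {p : K × K} {q : F × F} (hf : Set.InjOn f A)
    (h : ∀ a ∈ A, OnLine p a → OnLine q (f a)) :
    (linesThrough A p).card ≤ (linesThrough (A.image f) q).card := by
  refine Finset.card_le_card_of_injOn f (fun a ha => ?_)
    (hf.mono (Finset.coe_subset.2 (linesThrough_subset A p)))
  rw [Finset.mem_coe, mem_linesThrough] at ha ⊢
  exact ⟨Finset.mem_image_of_mem f ha.1, h a ha.1 ha.2⟩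

lemma sum_card_linesThrough_le_add_sq (L P : Finset (K × K)) :
    ∑ p ∈ P, (linesThrough L p).card ≤ (P.biUnion (linesThrough L)).card + P.card ^ 2 :=
  sum_card_le_card_biUnion_add_sq P _ fun _ _ _ _ h => card_linesThrough_inter_le_one L h

lemma biUnion_linesThrough_subset (L P : Finset (K × K)) : P.biUnion (linesThrough L) ⊆ L :=
  Finset.biUnion_subset.2 fun p _ => linesThrough_subset L p

lemma card_mul_le_card_biUnion_linesThrough (L P : Finset (K × K)) {s : ℕ} (hP : P.card ≤ s)
    (h : ∀ p ∈ P, 2 * s ≤ (linesThrough L p).card) :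
    P.card * s ≤ (P.biUnion (linesThrough L)).card := by
  have hsum := (Finset.card_nsmul_le_sum P _ _ h).trans (sum_card_linesThrough_le_add_sq L P)
  rw [smul_eq_mul] at hsum
  nlinarith

lemma card_le_card_sq_of_one_lt_card_linesThrough (L P : Finset (K × K))
    (h : ∀ p ∈ P, 1 < (linesThrough L p).card) : P.card ≤ L.card ^ 2 := by
  have hdisj : (P : Set (K × K)).PairwiseDisjoint fun p => (linesThrough L p).offDiag := by
    intro p _ q _ hpq
    refine Finset.disjoint_left.2 fun e hep heq => ?_
    rw [Finset.mem_offDiag, mem_linesThrough, mem_linesThrough] at hep heq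
    exact hep.2.2 (OnLine.line_unique hpq hep.1.2 heq.1.2 hep.2.1.2 heq.2.1.2)
  calc P.card ≤ (P.biUnion fun p => (linesThrough L p).offDiag).card :=
        Finset.card_le_card_biUnion hdisj fun p hp =>
          have ⟨a, ha, b, hb, hab⟩ := Finset.one_lt_card.1 (h p hp)
          ⟨(a, b), Finset.mem_offDiag.2 ⟨ha, hb, hab⟩⟩
    _ ≤ (L ×ˢ L).card := Finset.card_le_card <| Finset.biUnion_subset.2 fun p _ e he =>
        have he := Finset.mem_offDiag.1 he
        Finset.mk_mem_product (linesThrough_subset L p he.1) (linesThrough_subset L p he.2.1)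
    _ = L.card ^ 2 := by rw [Finset.card_product, sq]

/- Any `⌊t / 2⌋` of the points already meet about `t ^ 2 / 4` lines. -/
lemma card_le_or_sq_le_of_le_card_linesThrough (L P : Finset (K × K)) {t : ℝ} (ht : 2 ≤ t)
    (h : ∀ p ∈ P, t ≤ (linesThrough L p).card) :
    (P.card : ℝ) ≤ 2 * (L.card / t) ∨ t ^ 2 ≤ 8 * L.card := by
  have hfew : ∀ S ⊆ P, (S.card : ℝ) ≤ t / 2 → (S.card : ℝ) * t ≤ 2 * L.card := by
    intro S hS hSt
    have hlower := Finset.card_nsmul_le_sum S (fun p => ((linesThrough L p).card : ℝ)) t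
      fun p hp => h p (hS hp)
    have hupper : ∑ p ∈ S, ((linesThrough L p).card : ℝ) ≤ L.card + (S.card : ℝ) ^ 2 := by
      exact_mod_cast (sum_card_linesThrough_le_add_sq L S).trans
        (Nat.add_le_add_right (Finset.card_le_card (biUnion_linesThrough_subset L S)) _)
    rw [nsmul_eq_mul] at hlower
    nlinarith
  rcases le_total (P.card : ℝ) (t / 2) with hP | hP
  · left
    rw [← mul_div_assoc, le_div_iff₀ (by linarith)]
    exact hfew P subset_rfl hP
  · right
    obtain ⟨S, hS, hScard⟩ := Finset.exists_subset_card_eq (Nat.floor_le_of_le hP)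
    have hfloor_le : (⌊t / 2⌋₊ : ℝ) ≤ t / 2 := Nat.floor_le (by linarith)
    have hlt_floor : t / 2 < ⌊t / 2⌋₊ + 1 := Nat.lt_floor_add_one _
    have hfloor : (1 : ℝ) ≤ ⌊t / 2⌋₊ := Nat.one_le_cast.2 (Nat.le_floor (by push_cast; linarith))
    have := hfew S hS (by rwa [hScard])
    rw [hScard] at this
    nlinarith

end Lines

section FlatSteep

variable {𝕜 : Type*} [NormedField 𝕜]

/-- A norm on `𝕜²` in which the line of slope `γ` through the origin is measured by its first
coordinate. -/
noncomputable def slantNorm (γ : 𝕜) (v : 𝕜 × 𝕜) : ℝ := ‖v.1‖ + ‖v.2 - γ * v.1‖ / 2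

/-- The points of `P` that are closer to `p`, in the norm adapted to the line `a`, than every other
point of `P` on `a`. -/
noncomputable def closePoints (P : Finset (𝕜 × 𝕜)) (p a : 𝕜 × 𝕜) : Finset (𝕜 × 𝕜) :=
  P.filter fun q => ∀ x ∈ P, x ≠ p → OnLine x a → slantNorm a.1 (q - p) < ‖x.1 - p.1‖

/-- The point `p` of the line `a` links `a` to the line `x = b.1 * y + b.2` if the latter passes
through a point close to `p`. Lines that are steep are encoded, here and below, as lines with
small slope after swapping the coordinates. -/
def Links (P : Finset (𝕜 × 𝕜)) (p a b : 𝕜 × 𝕜) : Prop :=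
  OnLine p a ∧ ∃ q ∈ closePoints P p a, OnLine q.swap b

/-- The lines of `A` through `p` along which `p` has at least `s` close points. -/
noncomputable def goodLines (P A : Finset (𝕜 × 𝕜)) (s : ℕ) (p : 𝕜 × 𝕜) : Finset (𝕜 × 𝕜) :=
  (linesThrough A p).filter fun a => s ≤ (closePoints P p a).card

/-- The points of `P` on at least `s` good lines. -/
noncomputable def goodPoints (P A : Finset (𝕜 × 𝕜)) (s : ℕ) : Finset (𝕜 × 𝕜) :=
  P.filter fun p => s ≤ (goodLines P A s p).card

lemma half_le_norm_one_sub_mul {a b : 𝕜} (ha : ‖a‖ ≤ 1 / 4) (hb : ‖b‖ ≤ 1 / 4) :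
    1 / 2 ≤ ‖1 - a * b‖ := by
  have h := norm_sub_norm_le (1 : 𝕜) (a * b)
  rw [norm_one, norm_mul] at h
  nlinarith [norm_nonneg a, norm_nonneg b]

lemma exists_onLine_onLine_swap {a b : 𝕜 × 𝕜} (ha : ‖a.1‖ ≤ 1 / 4) (hb : ‖b.1‖ ≤ 1 / 4) :
    ∃ z : 𝕜 × 𝕜, OnLine z a ∧ OnLine z.swap b := by
  have hne : 1 - b.1 * a.1 ≠ 0 :=
    norm_pos_iff.1 (one_half_pos.trans_le (half_le_norm_one_sub_mul hb ha))
  refine ⟨((b.1 * a.2 + b.2) / (1 - b.1 * a.1),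
    a.1 * ((b.1 * a.2 + b.2) / (1 - b.1 * a.1)) + a.2), rfl, ?_⟩
  simp only [OnLine, Prod.fst_swap, Prod.snd_swap]
  field_simp
  ring

lemma norm_sub_le_slantNorm {a b p q z : 𝕜 × 𝕜} (ha : ‖a.1‖ ≤ 1 / 4) (hb : ‖b.1‖ ≤ 1 / 4)
    (hpa : OnLine p a) (hza : OnLine z a) (hzb : OnLine z.swap b) (hqb : OnLine q.swap b) :
    ‖p.1 - z.1‖ ≤ slantNorm a.1 (q - p) := by
  simp only [OnLine, Prod.fst_swap, Prod.snd_swap] at hpa hza hzb hqb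
  have hfst : p.1 - z.1 = b.1 * (q.2 - z.2) - (q - p).1 := by
    simp only [Prod.fst_sub]
    linear_combination hqb - hzb
  have hslant : (q - p).2 - a.1 * (q - p).1 = (1 - a.1 * b.1) * (q.2 - z.2) := by
    simp only [Prod.fst_sub, Prod.snd_sub]
    linear_combination hza - hpa - a.1 * hqb + a.1 * hzb
  have htri := norm_sub_le (b.1 * (q.2 - z.2)) (q - p).1
  rw [← hfst, norm_mul] at htri
  have hhalf := half_le_norm_one_sub_mul ha hb
  rw [slantNorm, hslant, norm_mul]
  nlinarith [norm_nonneg (q.2 - z.2)]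

lemma card_filter_links_le [NormedAlgebra ℝ 𝕜] [FiniteDimensional ℝ 𝕜] (P : Finset (𝕜 × 𝕜))
    {a b : 𝕜 × 𝕜} (ha : ‖a.1‖ ≤ 1 / 4) (hb : ‖b.1‖ ≤ 1 / 4) :
    (P.filter fun p => Links P p a b).card ≤ 5 ^ finrank ℝ 𝕜 := by
  obtain ⟨z, hza, hzb⟩ := exists_onLine_onLine_swap ha hb
  rw [← Finset.card_image_of_injOn (f := Prod.fst)]
  · refine card_le_of_norm_sub_lt _ z.1 ?_
    simp only [Finset.forall_mem_image, Finset.mem_filter]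
    rintro p ⟨-, hpa, q, hq, hqb⟩ p' ⟨hp', hpa', -⟩ hne
    rw [norm_sub_rev p.1 p'.1]
    exact (norm_sub_le_slantNorm ha hb hpa hza hzb hqb).trans_lt
      ((Finset.mem_filter.1 hq).2 p' hp' (fun h => hne (congrArg Prod.fst h.symm)) hpa')
  · intro p hp q hq h
    exact (Finset.mem_filter.1 hp).2.1.point_ext (Finset.mem_filter.1 hq).2.1 h

lemma sq_le_card_filter_links {P B : Finset (𝕜 × 𝕜)} {s : ℕ} {p a : 𝕜 × 𝕜} (hpa : OnLine p a)
    (hs : s ≤ (closePoints P p a).card)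
    (hB : ∀ q ∈ P, 2 * s ≤ (linesThrough B q.swap).card) :
    s ^ 2 ≤ (B.filter fun b => Links P p a b).card := by
  obtain ⟨S, hS, hScard⟩ := Finset.exists_subset_card_eq hs
  have hcard : (S.image Prod.swap).card = s := by
    rw [Finset.card_image_of_injective _ Prod.swap_injective, hScard]
  have hmany := card_mul_le_card_biUnion_linesThrough B (S.image Prod.swap) hcard.le <|
    Finset.forall_mem_image.2 fun q hq => hB q (Finset.mem_of_mem_filter q (hS hq))
  rw [hcard, ← sq] at hmany
  refine hmany.trans (Finset.card_le_card fun b hb => ?_)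
  simp only [Finset.mem_biUnion, Finset.mem_image, mem_linesThrough] at hb
  obtain ⟨_, ⟨q, hq, rfl⟩, hbB, hqb⟩ := hb
  exact Finset.mem_filter.2 ⟨hbB, hpa, q, hS hq, hqb⟩

lemma card_goodPoints_mul_le [NormedAlgebra ℝ 𝕜] [FiniteDimensional ℝ 𝕜]
    (P A B : Finset (𝕜 × 𝕜)) (s : ℕ) (hA : ∀ a ∈ A, ‖a.1‖ ≤ 1 / 4)
    (hB : ∀ b ∈ B, ‖b.1‖ ≤ 1 / 4) (hPB : ∀ p ∈ P, 2 * s ≤ (linesThrough B p.swap).card) :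
    (goodPoints P A s).card * s ^ 3 ≤ 5 ^ finrank ℝ 𝕜 * (A.card * B.card) := by
  have hgood : ∀ p ∈ goodPoints P A s,
      s ^ 3 ≤ ∑ a ∈ A, (B.filter fun b => Links P p a b).card := by
    intro p hp
    calc s ^ 3 = s * s ^ 2 := by ring
      _ ≤ (goodLines P A s p).card * s ^ 2 :=
        Nat.mul_le_mul_right _ (Finset.mem_filter.1 hp).2
      _ ≤ ∑ a ∈ goodLines P A s p, (B.filter fun b => Links P p a b).card := by
        refine Finset.card_nsmul_le_sum _ _ _ fun a ha => ?_
        rw [goodLines, Finset.mem_filter, mem_linesThrough] at ha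
        exact sq_le_card_filter_links ha.1.2 ha.2 hPB
      _ ≤ ∑ a ∈ A, (B.filter fun b => Links P p a b).card :=
        Finset.sum_le_sum_of_subset
          ((Finset.filter_subset _ _).trans (linesThrough_subset A p))
  calc (goodPoints P A s).card * s ^ 3
      ≤ ∑ p ∈ goodPoints P A s, ∑ a ∈ A, (B.filter fun b => Links P p a b).card :=
        Finset.card_nsmul_le_sum _ _ _ hgood
    _ ≤ ∑ p ∈ P, ∑ a ∈ A, (B.filter fun b => Links P p a b).card :=
        Finset.sum_le_sum_of_subset (Finset.filter_subset _ _)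
    _ = ∑ a ∈ A, ∑ b ∈ B, (P.filter fun p => Links P p a b).card := by
        rw [Finset.sum_comm]
        exact Finset.sum_congr rfl fun a _ =>
          Finset.sum_card_bipartiteAbove_eq_sum_card_bipartiteBelow fun p b => Links P p a b
    _ ≤ ∑ _a ∈ A, ∑ _b ∈ B, 5 ^ finrank ℝ 𝕜 :=
        Finset.sum_le_sum fun a ha => Finset.sum_le_sum fun b hb =>
          card_filter_links_le P (hA a ha) (hB b hb)
    _ = 5 ^ finrank ℝ 𝕜 * (A.card * B.card) := by
        simp only [Finset.sum_const, smul_eq_mul]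
        ring

lemma exists_nearest_of_card_closePoints_lt {P : Finset (𝕜 × 𝕜)} {p a : 𝕜 × 𝕜}
    (h : (closePoints P p a).card < P.card) :
    ∃ q ∈ P, q ≠ p ∧ OnLine q a ∧
      (P.filter fun x => slantNorm a.1 (x - p) < ‖q.1 - p.1‖) ⊆ closePoints P p a := by
  have hne : (P.filter fun q => q ≠ p ∧ OnLine q a).Nonempty := by
    by_contra! hempty
    rw [Finset.filter_eq_empty_iff] at hempty
    refine h.ne (congrArg Finset.card (Finset.filter_true_of_mem ?_))
    exact fun _ _ x hx hxp hxa => absurd ⟨hxp, hxa⟩ (hempty hx)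
  obtain ⟨q, hq, hmin⟩ := Finset.exists_min_image _ (fun q => ‖q.1 - p.1‖) hne
  obtain ⟨hqP, hqp, hqa⟩ := Finset.mem_filter.1 hq
  refine ⟨q, hqP, hqp, hqa, fun x hx => ?_⟩
  rw [Finset.mem_filter] at hx
  exact Finset.mem_filter.2 ⟨hx.1, fun y hy hyp hya =>
    hx.2.trans_le (hmin y (Finset.mem_filter.2 ⟨hy, hyp, hya⟩))⟩

lemma exists_cone_of_notMem_goodPoints {P A : Finset (𝕜 × 𝕜)} {s : ℕ} {p : 𝕜 × 𝕜}
    (hA : ∀ a ∈ A, ‖a.1‖ ≤ 1 / 4) (hs : 0 < s) (hsP : s ≤ P.card) (hp : p ∈ P)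
    (hpA : 2 * s ≤ (linesThrough A p).card) (hbad : p ∉ goodPoints P A s) :
    ∃ r : ℝ, 0 < r ∧ ∃ a ∈ A, (P.filter fun q => slantNorm a.1 (q - p) < r).card < s ∧
      ∃ T ⊆ P, s ≤ T.card ∧ ∀ q ∈ T, ‖(q - p).1‖ ≤ r ∧ ‖(q - p).2‖ ≤ r / 4 := by
  have hgood : (goodLines P A s p).card < s := by
    by_contra! h
    exact hbad (Finset.mem_filter.2 ⟨hp, h⟩)
  set bad := linesThrough A p \ goodLines P A s p
  have hbad_card : s ≤ bad.card := by
    have hsdiff : (linesThrough A p).card - (goodLines P A s p).card ≤ bad.card :=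
      Finset.le_card_sdiff _ _
    omega
  have hbad_mem : ∀ a ∈ bad, a ∈ A ∧ OnLine p a ∧ (closePoints P p a).card < s := by
    intro a ha
    rw [Finset.mem_sdiff, goodLines, Finset.mem_filter, not_and, not_le] at ha
    exact ⟨(mem_linesThrough.1 ha.1).1, (mem_linesThrough.1 ha.1).2, ha.2 ha.1⟩
  choose! f hfP hfne hfon hfclose using fun a ha =>
    exists_nearest_of_card_closePoints_lt ((hbad_mem a ha).2.2.trans_le hsP)
  obtain ⟨a₀, ha₀, hmax⟩ := Finset.exists_max_image bad (fun a => ‖(f a).1 - p.1‖)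
    (Finset.card_pos.1 (hs.trans_le hbad_card))
  obtain ⟨ha₀A, hpa₀, ha₀close⟩ := hbad_mem a₀ ha₀
  have hf_inj : Set.InjOn f bad := fun a ha b hb hab =>
    OnLine.line_unique (hfne a ha) (hfon a ha) (hbad_mem a ha).2.1 (hab ▸ hfon b hb)
      (hbad_mem b hb).2.1
  refine ⟨‖(f a₀).1 - p.1‖, ?_, a₀, ha₀A, ?_, bad.image f, ?_, ?_, ?_⟩
  · rw [norm_pos_iff, sub_ne_zero]
    exact fun h => hfne a₀ ha₀ ((hfon a₀ ha₀).point_ext hpa₀ h)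
  · exact (Finset.card_le_card (hfclose a₀ ha₀)).trans_lt ha₀close
  · exact Finset.image_subset_iff.2 hfP
  · rwa [Finset.card_image_of_injOn hf_inj]
  · refine Finset.forall_mem_image.2 fun a ha => ⟨hmax a ha, ?_⟩
    have hslope : (f a - p).2 = a.1 * (f a - p).1 := by
      rw [Prod.snd_sub, Prod.fst_sub, hfon a ha, (hbad_mem a ha).2.1]
      ring
    rw [hslope, norm_mul, div_eq_inv_mul, ← one_div]
    exact mul_le_mul (hA a (hbad_mem a ha).1) (hmax a ha) (norm_nonneg _) (by norm_num)

lemma slantNorm_swap_lt {γ : 𝕜} {v : 𝕜 × 𝕜} {r : ℝ} (hγ : ‖γ‖ ≤ 1 / 4) (hr : 0 < r)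
    (h₁ : ‖v.1‖ ≤ r) (h₂ : ‖v.2‖ ≤ r / 4) : slantNorm γ v.swap < r := by
  have htri := norm_sub_le v.1 (γ * v.2)
  rw [norm_mul] at htri
  have hmul : ‖γ‖ * ‖v.2‖ ≤ 1 / 4 * (r / 4) := mul_le_mul hγ h₂ (norm_nonneg _) (by norm_num)
  simp only [slantNorm, Prod.fst_swap, Prod.snd_swap]
  linarith

/- The cone around `p` that exists if `p` is not good for `A` lies in the ball around `p.swap` that
exists if `p.swap` is not good for `B`, provided that the latter has the larger radius. -/
lemma card_cone_le_card_slantBall_swap {P T : Finset (𝕜 × 𝕜)} {p : 𝕜 × 𝕜} {γ : 𝕜} {r r' : ℝ}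
    (hγ : ‖γ‖ ≤ 1 / 4) (hr : 0 < r) (hrr : r ≤ r') (hTP : T ⊆ P)
    (hT : ∀ q ∈ T, ‖(q - p).1‖ ≤ r ∧ ‖(q - p).2‖ ≤ r / 4) :
    T.card ≤ ((P.image Prod.swap).filter fun q => slantNorm γ (q - p.swap) < r').card := by
  refine Finset.card_le_card_of_injOn Prod.swap (fun q hq => ?_) Prod.swap_injective.injOn
  refine Finset.mem_filter.2 ⟨Finset.mem_image_of_mem _ (hTP hq), ?_⟩
  exact (slantNorm_swap_lt (v := q - p) hγ hr (hT q hq).1 (hT q hq).2).trans_le hrr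

lemma mem_goodPoints_or_swap_mem_goodPoints {P A B : Finset (𝕜 × 𝕜)} {s : ℕ} {p : 𝕜 × 𝕜}
    (hA : ∀ a ∈ A, ‖a.1‖ ≤ 1 / 4) (hB : ∀ b ∈ B, ‖b.1‖ ≤ 1 / 4) (hs : 0 < s) (hsP : s ≤ P.card)
    (hp : p ∈ P) (hpA : 2 * s ≤ (linesThrough A p).card)
    (hpB : 2 * s ≤ (linesThrough B p.swap).card) :
    p ∈ goodPoints P A s ∨ p.swap ∈ goodPoints (P.image Prod.swap) B s := by
  by_contra! hbad
  have hsP' : s ≤ (P.image Prod.swap).card := by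
    rwa [Finset.card_image_of_injective _ Prod.swap_injective]
  obtain ⟨r, hr, a, ha, hfew, T, hTP, hTcard, hT⟩ :=
    exists_cone_of_notMem_goodPoints hA hs hsP hp hpA hbad.1
  obtain ⟨r', hr', b, hb, hfew', T', hTP', hTcard', hT'⟩ :=
    exists_cone_of_notMem_goodPoints hB hs hsP' (Finset.mem_image_of_mem _ hp) hpB hbad.2
  rcases le_total r r' with hle | hle
  · have := card_cone_le_card_slantBall_swap (hB b hb) hr hle hTP hT
    omega
  · have := card_cone_le_card_slantBall_swap (hA a ha) hr' hle hTP' hT'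
    rw [Finset.image_image, Prod.swap_swap_eq, Finset.image_id, Prod.swap_swap] at this
    omega

lemma card_mul_le_of_small_slopes [NormedAlgebra ℝ 𝕜] [FiniteDimensional ℝ 𝕜]
    (P A B : Finset (𝕜 × 𝕜)) {s : ℕ} (hA : ∀ a ∈ A, ‖a.1‖ ≤ 1 / 4)
    (hB : ∀ b ∈ B, ‖b.1‖ ≤ 1 / 4) (hs : 0 < s) (hsP : s ≤ P.card)
    (hPA : ∀ p ∈ P, 2 * s ≤ (linesThrough A p).card)
    (hPB : ∀ p ∈ P, 2 * s ≤ (linesThrough B p.swap).card) :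
    P.card * s ^ 3 ≤ 2 * 5 ^ finrank ℝ 𝕜 * (A.card * B.card) := by
  have hgood := card_goodPoints_mul_le P A B s hA hB hPB
  have hgood' := card_goodPoints_mul_le (P.image Prod.swap) B A s hB hA
    (Finset.forall_mem_image.2 fun p hp => (Prod.swap_swap p).symm ▸ hPA p hp)
  have hcover : P ⊆ goodPoints P A s ∪ (goodPoints (P.image Prod.swap) B s).image Prod.swap := by
    intro p hp
    rw [Finset.mem_union]
    exact (mem_goodPoints_or_swap_mem_goodPoints hA hB hs hsP hp (hPA p hp) (hPB p hp)).imp_right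
      fun h => Finset.mem_image.2 ⟨_, h, Prod.swap_swap p⟩
  have hcard := (Finset.card_le_card hcover).trans
    ((Finset.card_union_le _ _).trans (Nat.add_le_add_left Finset.card_image_le _))
  nlinarith [Nat.mul_le_mul_right (s ^ 3) hcard]

end FlatSteep

section CoordinateChanges

variable {K : Type*} [Field K]

/-- The linear change of coordinates of `K²` that turns the slope `m` of a line into
`(m - c) / d`. -/
def shear (c d : K) (p : K × K) : K × K := (p.1, (p.2 - c * p.1) / d)

/-- The action of `shear c d` on non-vertical lines. -/
def shearLine (c d : K) (a : K × K) : K × K := ((a.1 - c) / d, a.2 / d)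

/-- The line `x = a.1 * y + a.2` in the form `y = m * x + k`, for `a.1 ≠ 0`. It is also the action
of the coordinate swap on lines. -/
def swapLine (a : K × K) : K × K := (a.1⁻¹, -a.2 / a.1)

lemma shear_injective (c : K) {d : K} (hd : d ≠ 0) : Function.Injective (shear c d) := by
  intro p q h
  simp only [shear, Prod.mk.injEq, div_left_inj' hd] at h
  exact Prod.ext h.1 (by simpa only [h.1, sub_left_inj] using h.2)

lemma shearLine_injective (c : K) {d : K} (hd : d ≠ 0) : Function.Injective (shearLine c d) := by
  intro a b h
  simp only [shearLine, Prod.mk.injEq, div_left_inj' hd, sub_left_inj] at h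
  exact Prod.ext h.1 h.2

lemma swapLine_swapLine {a : K × K} (ha : a.1 ≠ 0) : swapLine (swapLine a) = a := by
  refine Prod.ext (inv_inv a.1) ?_
  simp only [swapLine]
  field_simp

lemma OnLine.shear {p a : K × K} (h : OnLine p a) (c d : K) :
    OnLine (shear c d p) (shearLine c d a) := by
  simp only [OnLine, _root_.shear, shearLine] at h ⊢
  rw [h]
  ring

lemma OnLine.swap {p a : K × K} (h : OnLine p a) (ha : a.1 ≠ 0) : OnLine p.swap (swapLine a) := by
  simp only [OnLine, swapLine, Prod.fst_swap, Prod.snd_swap] at h ⊢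
  rw [h]
  field_simp
  ring

end CoordinateChanges

section SeparatedSlopes

variable {𝕜 : Type*} [NormedField 𝕜] [NormedAlgebra ℝ 𝕜] [FiniteDimensional ℝ 𝕜]

lemma card_mul_le_of_flat_of_steep (P A B : Finset (𝕜 × 𝕜)) {s : ℕ} (hA : ∀ a ∈ A, ‖a.1‖ ≤ 1 / 4)
    (hB : ∀ b ∈ B, 4 ≤ ‖b.1‖) (hs : 0 < s) (hsP : s ≤ P.card)
    (hPA : ∀ p ∈ P, 2 * s ≤ (linesThrough A p).card)
    (hPB : ∀ p ∈ P, 2 * s ≤ (linesThrough B p).card) :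
    P.card * s ^ 3 ≤ 2 * 5 ^ finrank ℝ 𝕜 * (A.card * B.card) := by
  have hne : ∀ b ∈ B, b.1 ≠ 0 := fun b hb => norm_pos_iff.1 (four_pos.trans_le (hB b hb))
  have hinj : Set.InjOn swapLine (B : Set (𝕜 × 𝕜)) := fun a ha b hb hab => by
    rw [← swapLine_swapLine (hne a ha), hab, swapLine_swapLine (hne b hb)]
  rw [← Finset.card_image_of_injOn hinj]
  refine card_mul_le_of_small_slopes P A _ hA (Finset.forall_mem_image.2 fun b hb => ?_) hs hsP hPA
    fun p hp => (hPB p hp).trans ?_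
  · rw [swapLine, norm_inv, one_div]
    exact inv_anti₀ four_pos (hB b hb)
  · exact card_linesThrough_le_of_onLine_imp hinj fun b hb h => h.swap (hne b hb)

lemma card_mul_le_of_separated_slopes (P A B : Finset (𝕜 × 𝕜)) (c : 𝕜) {ρ : ℝ} (hρ : 0 < ρ)
    {s : ℕ} (hA : ∀ a ∈ A, ‖a.1 - c‖ ≤ ρ) (hB : ∀ b ∈ B, 16 * ρ < ‖b.1 - c‖) (hs : 0 < s)
    (hsP : s ≤ P.card) (hPA : ∀ p ∈ P, 2 * s ≤ (linesThrough A p).card)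
    (hPB : ∀ p ∈ P, 2 * s ≤ (linesThrough B p).card) :
    P.card * s ^ 3 ≤ 2 * 5 ^ finrank ℝ 𝕜 * (A.card * B.card) := by
  set d := algebraMap ℝ 𝕜 (4 * ρ)
  have hnorm : ‖d‖ = 4 * ρ := by rw [norm_algebraMap', Real.norm_of_nonneg (by positivity)]
  have hd : d ≠ 0 := norm_pos_iff.1 (hnorm ▸ by positivity)
  have hline := shearLine_injective c hd
  have hrich : ∀ L : Finset (𝕜 × 𝕜), (∀ p ∈ P, 2 * s ≤ (linesThrough L p).card) →
      ∀ q ∈ P.image (shear c d), 2 * s ≤ (linesThrough (L.image (shearLine c d)) q).card :=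
    fun L hL => Finset.forall_mem_image.2 fun p hp => (hL p hp).trans
      (card_linesThrough_le_of_onLine_imp hline.injOn fun a _ h => h.shear c d)
  rw [← Finset.card_image_of_injective P (shear_injective c hd)] at hsP ⊢
  rw [← Finset.card_image_of_injective A hline, ← Finset.card_image_of_injective B hline]
  refine card_mul_le_of_flat_of_steep _ _ _ (Finset.forall_mem_image.2 fun a ha => ?_)
    (Finset.forall_mem_image.2 fun b hb => ?_) hs hsP (hrich A hPA) (hrich B hPB)
  · rw [shearLine, norm_div, hnorm, div_le_iff₀ (by positivity)]
    linarith [hA a ha]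
  · rw [shearLine, norm_div, hnorm, le_div_iff₀ (by positivity)]
    linarith [hB b hb]

lemma card_mul_le_card_sq_of_separated_slopes {L A B : Finset (𝕜 × 𝕜)} (hAL : A ⊆ L) (hBL : B ⊆ L)
    (P : Finset (𝕜 × 𝕜)) (c : 𝕜) {ρ : ℝ} (hρ : 0 < ρ) {s : ℕ} (hA : ∀ a ∈ A, ‖a.1 - c‖ ≤ ρ)
    (hB : ∀ b ∈ B, 16 * ρ < ‖b.1 - c‖) (hs : 0 < s) (hsL : s ^ 2 ≤ 2 * L.card)
    (hPA : ∀ p ∈ P, 2 * s ≤ (linesThrough A p).card)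
    (hPB : ∀ p ∈ P, 2 * s ≤ (linesThrough B p).card) :
    P.card * s ^ 3 ≤ 2 * 5 ^ finrank ℝ 𝕜 * L.card ^ 2 := by
  rcases le_total s P.card with hsP | hPs
  · refine (card_mul_le_of_separated_slopes P A B c hρ hA hB hs hsP hPA hPB).trans ?_
    rw [sq]
    gcongr
  · have hfew : P.card * s ≤ L.card := (card_mul_le_card_biUnion_linesThrough A P hPs hPA).trans
      (Finset.card_le_card ((biUnion_linesThrough_subset A P).trans hAL))
    calc P.card * s ^ 3 = P.card * s * s ^ 2 := by ring
      _ ≤ L.card * (2 * L.card) := Nat.mul_le_mul hfew hsL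
      _ = 2 * 1 * L.card ^ 2 := by ring
      _ ≤ 2 * 5 ^ finrank ℝ 𝕜 * L.card ^ 2 := by
        gcongr
        exact Nat.one_le_pow _ _ (by norm_num)

variable (𝕜) in
/- The two sets are the lines with slope near to and far from a suitable `c`, with a gap between
them, or a class of parallel lines and all lines; no point is on two lines of the former. -/
lemma exists_splitting :
    ∃ ε : ℝ, 0 < ε ∧ ε ≤ 1 ∧ ∀ L : Finset (𝕜 × 𝕜), L.Nonempty → ∃ A ⊆ L, ∃ B ⊆ L,
      ((L \ A).card : ℝ) ^ 2 + ((L \ B).card : ℝ) ^ 2 ≤ (1 - ε) * L.card ^ 2 ∧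
      ∀ (P : Finset (𝕜 × 𝕜)) (s : ℕ), 0 < s → s ^ 2 ≤ 2 * L.card →
        (∀ p ∈ P, 2 * s ≤ (linesThrough A p).card) →
        (∀ p ∈ P, 2 * s ≤ (linesThrough B p).card) →
        P.card * s ^ 3 ≤ 2 * 5 ^ finrank ℝ 𝕜 * L.card ^ 2 := by
  obtain ⟨D, hD⟩ := exists_le_card_fiber_or_ball (E := 𝕜) 16
  set ε : ℝ := (1 + (D : ℝ) ^ 2)⁻¹
  have hε₀ : 0 < ε := by positivity
  have hε₁ : ε ≤ 1 := inv_le_one_of_one_le₀ (by nlinarith)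
  have hεD : ε * (1 + (D : ℝ) ^ 2) = 1 := inv_mul_cancel₀ (by positivity)
  refine ⟨ε, hε₀, hε₁, fun L hL => ?_⟩
  have hn : (0 : ℝ) < L.card := Nat.cast_pos.2 hL.card_pos
  obtain ⟨c, hpar | ⟨ρ, hρ, hnear, hmid⟩⟩ :=
    hD L Prod.fst (ε * L.card) (by positivity) (mul_le_of_le_one_left hn.le hε₁)
  · refine ⟨L.filter fun a => a.1 = c, Finset.filter_subset _ L, L, subset_rfl, ?_, ?_⟩
    · have hA := sq_card_sdiff_le (Finset.filter_subset _ L) hpar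
      have hB : ((L \ L).card : ℝ) = 0 := by simp
      rw [hB]
      nlinarith [mul_nonneg (mul_nonneg hε₀.le (sub_nonneg.2 hε₁)) (sq_nonneg (L.card : ℝ))]
    · intro P s hs _ hPA _
      have hP : P = ∅ := Finset.eq_empty_of_forall_notMem fun p hp => by
        have hle_one := card_linesThrough_le_one (A := L.filter fun a => a.1 = c)
          (fun a ha => (Finset.mem_filter.1 ha).2) p
        have := hPA p hp
        omega
      simp [hP]
  · refine ⟨L.filter fun a => ‖a.1 - c‖ ≤ ρ, Finset.filter_subset _ L,
      L.filter fun a => 16 * ρ < ‖a.1 - c‖, Finset.filter_subset _ L, ?_, ?_⟩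
    · have hA := sq_card_sdiff_le (Finset.filter_subset _ L) hnear
      have hLB : (L \ L.filter fun a => 16 * ρ < ‖a.1 - c‖) =
          L.filter fun a => ‖a.1 - c‖ ≤ 16 * ρ := by
        simp only [← Finset.filter_not, not_lt]
      have hB := pow_le_pow_left₀ (Nat.cast_nonneg _) hmid 2
      have hsum : ((1 - ε) * L.card) ^ 2 + (D * (ε * L.card)) ^ 2 = (1 - ε) * L.card ^ 2 := by
        linear_combination ε * L.card ^ 2 * hεD
      rw [hLB]
      exact (add_le_add hA hB).trans_eq hsum
    · intro P s hs hsL hPA hPB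
      exact card_mul_le_card_sq_of_separated_slopes (Finset.filter_subset _ L)
        (Finset.filter_subset _ L) P c hρ (fun a ha => (Finset.mem_filter.1 ha).2)
        (fun a ha => (Finset.mem_filter.1 ha).2) hs hsL hPA hPB

end SeparatedSlopes

section RichPoints

/-- The bound `O(n² / t³ + n / t)` for the number of points lying on at least `t` of `n` lines.
The constant of the second term is fixed because only `C` has to absorb errors. -/
noncomputable def richBound (C n t : ℝ) : ℝ := C * (n ^ 2 / t ^ 3) + 2 * (n / t)

lemma div_le_mul_sq_div_cube {n t : ℝ} (ht : 0 < t) (htn : t ^ 2 ≤ 8 * n) :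
    n / t ≤ 8 * (n ^ 2 / t ^ 3) := by
  have hn : 0 ≤ n := by nlinarith
  rw [← mul_div_assoc, div_le_div_iff₀ ht (by positivity)]
  nlinarith [mul_le_mul_of_nonneg_left htn (mul_nonneg hn ht.le)]

/- The gain `(1 - ε) / (1 - ε / 6) ^ 3 ≤ 1 - ε / 2` in the main term absorbs the other terms. -/
lemma richBound_add_richBound_add_le {ε C K n a b t : ℝ} (hε₀ : 0 < ε) (hε₁ : ε ≤ 1)
    (hC₀ : 0 ≤ C) (hC : 64 + K ≤ C * (ε / 2)) (ht : 0 < t) (htn : t ^ 2 ≤ 8 * n) (ha : a ≤ n)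
    (hb : b ≤ n) (hab : a ^ 2 + b ^ 2 ≤ (1 - ε) * n ^ 2) :
    richBound C a ((1 - ε / 6) * t) + richBound C b ((1 - ε / 6) * t) + K * (n ^ 2 / t ^ 3) ≤
      richBound C n t := by
  set θ := 1 - ε / 6 with hθ
  set u := n ^ 2 / t ^ 3 with hu
  have hu₀ : 0 ≤ u := by positivity
  have hθ₀ : 5 / 6 ≤ θ := by linarith
  have : 0 < θ := by linarith
  have hn : 0 ≤ n := by nlinarith
  have hgain : 1 - ε ≤ (1 - ε / 2) * θ ^ 3 := by
    have hbernoulli : 1 - ε / 2 ≤ θ ^ 3 := by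
      have := one_add_mul_le_pow (a := -(ε / 6)) (by linarith) 3
      rw [hθ]
      norm_num at this ⊢
      linarith
    nlinarith
  have hquad : (a ^ 2 + b ^ 2) / (θ * t) ^ 3 ≤ (1 - ε / 2) * u := by
    rw [hu, ← mul_div_assoc, mul_pow, div_le_div_iff₀ (by positivity) (by positivity)]
    calc (a ^ 2 + b ^ 2) * t ^ 3 ≤ (1 - ε) * n ^ 2 * t ^ 3 := by gcongr
      _ ≤ (1 - ε / 2) * θ ^ 3 * n ^ 2 * t ^ 3 := by gcongr
      _ = (1 - ε / 2) * n ^ 2 * (θ ^ 3 * t ^ 3) := by ring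
  have hlin : (a + b) / (θ * t) ≤ 3 * (n / t) := by
    rw [← mul_div_assoc, div_le_div_iff₀ (by positivity) ht]
    nlinarith [mul_nonneg hn ht.le, mul_le_mul_of_nonneg_right (add_le_add ha hb) ht.le]
  have hnt : n / t ≤ 8 * u := div_le_mul_sq_div_cube ht htn
  calc richBound C a (θ * t) + richBound C b (θ * t) + K * u
      = C * ((a ^ 2 + b ^ 2) / (θ * t) ^ 3) + 2 * ((a + b) / (θ * t)) + K * u := by
        simp only [richBound]
        ring
    _ ≤ C * ((1 - ε / 2) * u) + 2 * (3 * (n / t)) + K * u := by gcongr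
    _ ≤ richBound C n t := by
        rw [richBound]
        nlinarith [mul_le_mul_of_nonneg_right hC hu₀]

lemma card_mul_cube_le_of_forall_nat {K : Type*} [Field K] {L A B P : Finset (K × K)} {N : ℕ}
    {τ : ℝ} (hrich : ∀ s : ℕ, 0 < s → s ^ 2 ≤ 2 * L.card →
      (∀ p ∈ P, 2 * s ≤ (linesThrough A p).card) → (∀ p ∈ P, 2 * s ≤ (linesThrough B p).card) →
      P.card * s ^ 3 ≤ N * L.card ^ 2)
    (hτ : 2 ≤ τ) (hτL : τ ^ 2 ≤ 8 * L.card) (hPA : ∀ p ∈ P, τ ≤ (linesThrough A p).card)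
    (hPB : ∀ p ∈ P, τ ≤ (linesThrough B p).card) :
    P.card * τ ^ 3 ≤ 64 * N * (L.card : ℝ) ^ 2 := by
  set s := ⌊τ / 2⌋₊
  have hs_le : (s : ℝ) ≤ τ / 2 := Nat.floor_le (by linarith)
  have hs_pos : 0 < s := Nat.floor_pos.2 (by linarith)
  have hs_ge : τ / 4 ≤ s := by
    have hlt_floor : τ / 2 < s + 1 := Nat.lt_floor_add_one _
    have : (1 : ℝ) ≤ s := Nat.one_le_cast.2 hs_pos
    linarith
  have hnat : ∀ m : ℕ, τ ≤ m → 2 * s ≤ m := fun m hm =>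
    Nat.cast_le (α := ℝ).1 (by push_cast; linarith)
  have hsL : s ^ 2 ≤ 2 * L.card := Nat.cast_le (α := ℝ).1 (by push_cast; nlinarith)
  have hs : (P.card : ℝ) * s ^ 3 ≤ N * (L.card : ℝ) ^ 2 := by
    exact_mod_cast hrich s hs_pos hsL (fun p hp => hnat _ (hPA p hp)) fun p hp => hnat _ (hPB p hp)
  calc (P.card : ℝ) * τ ^ 3 = 64 * (P.card * (τ / 4) ^ 3) := by ring
    _ ≤ 64 * (P.card * (s : ℝ) ^ 3) := by gcongr
    _ ≤ 64 * (N * (L.card : ℝ) ^ 2) := by gcongr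
    _ = 64 * N * (L.card : ℝ) ^ 2 := by ring

lemma le_card_linesThrough_of_card_linesThrough_sdiff_lt {K : Type*} [Field K]
    {A L : Finset (K × K)} (hA : A ⊆ L) {p : K × K} {r s : ℝ}
    (hL : r + s ≤ (linesThrough L p).card) (hsdiff : (linesThrough (L \ A) p).card < r) :
    s ≤ (linesThrough A p).card := by
  rw [← card_linesThrough_sdiff_add hA p, Nat.cast_add] at hL
  linarith

lemma card_le_richBound_of_splitting {K : Type*} [Field K] {L A B P : Finset (K × K)} {N : ℕ}
    {ε C t : ℝ} (hε₀ : 0 < ε) (hε₁ : ε ≤ 1) (hC₀ : 0 ≤ C)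
    (hC : 64 + 64 * N / (ε / 6) ^ 3 ≤ C * (ε / 2)) (hAL : A ⊆ L) (hBL : B ⊆ L)
    (hsize : ((L \ A).card : ℝ) ^ 2 + ((L \ B).card : ℝ) ^ 2 ≤ (1 - ε) * L.card ^ 2)
    (hrich : ∀ (P : Finset (K × K)) (s : ℕ), 0 < s → s ^ 2 ≤ 2 * L.card →
      (∀ p ∈ P, 2 * s ≤ (linesThrough A p).card) → (∀ p ∈ P, 2 * s ≤ (linesThrough B p).card) →
      P.card * s ^ 3 ≤ N * L.card ^ 2)
    (hεt : 12 ≤ ε * t) (htL : t ^ 2 ≤ 8 * L.card)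
    (ihA : ∀ P' : Finset (K × K), (∀ p ∈ P', (1 - ε / 6) * t ≤ (linesThrough (L \ A) p).card) →
      P'.card ≤ richBound C (L \ A).card ((1 - ε / 6) * t))
    (ihB : ∀ P' : Finset (K × K), (∀ p ∈ P', (1 - ε / 6) * t ≤ (linesThrough (L \ B) p).card) →
      P'.card ≤ richBound C (L \ B).card ((1 - ε / 6) * t))
    (hP : ∀ p ∈ P, t ≤ (linesThrough L p).card) : P.card ≤ richBound C L.card t := by
  set θ := 1 - ε / 6
  have ht : 0 < t := pos_of_mul_pos_right (by linarith) hε₀.le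
  let PA := P.filter fun p => θ * t ≤ (linesThrough (L \ A) p).card
  let PB := P.filter fun p => θ * t ≤ (linesThrough (L \ B) p).card
  let S := P \ (PA ∪ PB)
  have hS : ∀ p ∈ S, ε / 6 * t ≤ (linesThrough A p).card ∧ ε / 6 * t ≤ (linesThrough B p).card := by
    intro p hp
    simp only [S, PA, PB, Finset.mem_sdiff, Finset.mem_union, Finset.mem_filter, not_or, not_and,
      not_le] at hp
    have hpL : θ * t + ε / 6 * t ≤ (linesThrough L p).card := by
      rw [← add_mul, sub_add_cancel, one_mul]
      exact hP p hp.1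
    exact ⟨le_card_linesThrough_of_card_linesThrough_sdiff_lt hAL hpL (hp.2.1 hp.1),
      le_card_linesThrough_of_card_linesThrough_sdiff_lt hBL hpL (hp.2.2 hp.1)⟩
  have hScard : (S.card : ℝ) ≤ 64 * N / (ε / 6) ^ 3 * (L.card ^ 2 / t ^ 3) := by
    have hτL : (ε / 6 * t) ^ 2 ≤ 8 * L.card :=
      (pow_le_pow_left₀ (by positivity) (by nlinarith) 2).trans htL
    have := card_mul_cube_le_of_forall_nat (hrich S) (by linarith) hτL (fun p hp => (hS p hp).1)
      fun p hp => (hS p hp).2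
    rwa [mul_pow, ← le_div_iff₀ (by positivity), mul_div_mul_comm] at this
  have hcover : P.card ≤ PA.card + PB.card + S.card :=
    (Finset.card_le_card_sdiff_add_card (s := P) (t := PA ∪ PB)).trans
      ((add_comm _ _).trans_le (Nat.add_le_add_right (Finset.card_union_le PA PB) _))
  calc (P.card : ℝ) ≤ PA.card + PB.card + S.card := by exact_mod_cast hcover
    _ ≤ richBound C (L \ A).card (θ * t) + richBound C (L \ B).card (θ * t) +
        64 * N / (ε / 6) ^ 3 * (L.card ^ 2 / t ^ 3) :=
      add_le_add (add_le_add (ihA PA fun p hp => (Finset.mem_filter.1 hp).2)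
        (ihB PB fun p hp => (Finset.mem_filter.1 hp).2)) hScard
    _ ≤ richBound C L.card t :=
      richBound_add_richBound_add_le hε₀ hε₁ hC₀ hC ht htL
        (Nat.cast_le.2 (Finset.card_le_card Finset.sdiff_subset))
        (Nat.cast_le.2 (Finset.card_le_card Finset.sdiff_subset)) hsize

lemma card_le_richBound_of_le {K : Type*} [Field K] {L P : Finset (K × K)} {T C t : ℝ}
    (ht : 1 < t) (htT : t ≤ T) (hC : T ^ 3 ≤ C) (hP : ∀ p ∈ P, t ≤ (linesThrough L p).card) :
    P.card ≤ richBound C L.card t := by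
  have hsq : (P.card : ℝ) ≤ (L.card : ℝ) ^ 2 := by
    exact_mod_cast card_le_card_sq_of_one_lt_card_linesThrough L P fun p hp =>
      Nat.one_lt_cast (α := ℝ).1 (ht.trans_le (hP p hp))
  have ht₀ : 0 < t := one_pos.trans ht
  calc (P.card : ℝ) ≤ t ^ 3 * (L.card ^ 2 / t ^ 3) := by
        rwa [mul_div_cancel₀ _ (by positivity)]
    _ ≤ C * (L.card ^ 2 / t ^ 3) := by
        gcongr
        exact (pow_le_pow_left₀ ht₀.le htT 3).trans hC
    _ ≤ richBound C L.card t := le_add_of_nonneg_right (by positivity)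

variable (𝕜 : Type*) [NormedField 𝕜] [NormedAlgebra ℝ 𝕜] [FiniteDimensional ℝ 𝕜]

theorem exists_card_le_richBound :
    ∃ C : ℝ, 4 ≤ C ∧ ∀ (L P : Finset (𝕜 × 𝕜)) (t : ℝ), 1 < t →
      (∀ p ∈ P, t ≤ (linesThrough L p).card) → P.card ≤ richBound C L.card t := by
  obtain ⟨ε, hε₀, hε₁, hsplit⟩ := exists_splitting 𝕜
  set N : ℕ := 2 * 5 ^ finrank ℝ 𝕜
  set C : ℝ := (12 / ε) ^ 3 + 2 / ε * (64 + 64 * N / (ε / 6) ^ 3) with hC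
  have hC_cube : (12 / ε) ^ 3 ≤ C := le_add_of_nonneg_right (by positivity)
  have hC_lin : 64 + 64 * N / (ε / 6) ^ 3 ≤ C * (ε / 2) := by
    have hcancel : 2 / ε * (64 + 64 * N / (ε / 6) ^ 3) * (ε / 2) = 64 + 64 * N / (ε / 6) ^ 3 := by
      field_simp
    rw [hC, add_mul, hcancel]
    exact le_add_of_nonneg_left (by positivity)
  have h12 : 12 ≤ 12 / ε := le_div_self (by norm_num) hε₀ hε₁
  have hC₄ : 4 ≤ C := by nlinarith [pow_le_pow_left₀ (by norm_num) h12 3]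
  refine ⟨C, hC₄, fun L => ?_⟩
  induction L using Finset.strongInduction with
  | H L ih =>
    intro P t ht hP
    rcases le_total t (12 / ε) with htε | hεt
    · exact card_le_richBound_of_le ht htε hC_cube hP
    rcases card_le_or_sq_le_of_le_card_linesThrough L P (by linarith) hP with hfew | htL
    · exact hfew.trans (le_add_of_nonneg_left (by positivity))
    have hn : (0 : ℝ) < L.card := by nlinarith
    obtain ⟨A, hAL, B, hBL, hsize, hrich⟩ := hsplit L (Finset.card_pos.1 (Nat.cast_pos.1 hn))
    have hlt : ∀ S ⊆ L, ((S.card : ℝ) ^ 2 ≤ (1 - ε) * L.card ^ 2) → S ⊂ L := fun S hS hcard =>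
      hS.ssubset_of_ne fun hSL => by rw [hSL] at hcard; nlinarith [pow_pos hn 2]
    have hθt : 1 < (1 - ε / 6) * t := by nlinarith
    refine card_le_richBound_of_splitting hε₀ hε₁ (by linarith) hC_lin hAL hBL hsize hrich
      (by rwa [← div_le_iff₀' hε₀]) htL (fun P' => ih _ (hlt _ Finset.sdiff_subset ?_) P' _ hθt)
      (fun P' => ih _ (hlt _ Finset.sdiff_subset ?_) P' _ hθt) hP
    · exact (le_add_of_nonneg_right (sq_nonneg _)).trans hsize
    · exact (le_add_of_nonneg_left (sq_nonneg _)).trans hsize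

end RichPoints

section Incidences

lemma mul_le_of_cube_le_richBound {C a w d : ℝ} (hC : 2 ≤ C) (ha : 0 < a) (hw : 0 ≤ w)
    (hwa : w ≤ a ^ 2) (hd : 0 < d) (h : a ^ 3 ≤ richBound C (w ^ 3) d) :
    d * a ≤ 2 * C * w ^ 2 := by
  by_contra! hlt
  have hw_le : w ^ 2 ≤ d * a := by nlinarith [sq_nonneg w]
  have hcube : (d * a) ^ 3 ≤ C * w ^ 6 + 2 * (w ^ 3 * d ^ 2) := by
    calc (d * a) ^ 3 = a ^ 3 * d ^ 3 := by ring
      _ ≤ richBound C (w ^ 3) d * d ^ 3 := by gcongr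
      _ = C * w ^ 6 + 2 * (w ^ 3 * d ^ 2) := by
        rw [richBound]
        field_simp
  have hmain : w ^ 6 ≤ w ^ 2 * (d * a) ^ 2 := by
    calc w ^ 6 = w ^ 2 * (w ^ 2) ^ 2 := by ring
      _ ≤ w ^ 2 * (d * a) ^ 2 := by gcongr
  have hlower : w ^ 3 * d ^ 2 ≤ w ^ 2 * (d * a) ^ 2 := by
    calc w ^ 3 * d ^ 2 = w ^ 2 * d ^ 2 * w := by ring
      _ ≤ w ^ 2 * d ^ 2 * a ^ 2 := by gcongr
      _ = w ^ 2 * (d * a) ^ 2 := by ring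
  have hstrict : 2 * C * w ^ 2 * (d * a) ^ 2 < (d * a) ^ 3 := by
    rw [pow_succ' (d * a) 2]
    gcongr
  nlinarith [mul_le_mul_of_nonneg_left hmain (by linarith : 0 ≤ C),
    mul_nonneg (sub_nonneg.2 hC) (by positivity : 0 ≤ w ^ 2 * (d * a) ^ 2)]

lemma half_le_sq_sub_sq_mul {a b : ℝ} (ha : 0 < a) (hb : 0 ≤ b) (h : a ^ 3 = b ^ 3 + 1) :
    1 / 2 ≤ (a ^ 2 - b ^ 2) * a := by
  have hba : b ≤ a := le_of_pow_le_pow_left₀ three_ne_zero ha.le (by linarith)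
  have hfactor : (a - b) * (a ^ 2 + a * b + b ^ 2) = 1 := by linear_combination h
  have hquad : a ^ 2 + a * b + b ^ 2 ≤ 2 * (a * (a + b)) := by nlinarith [mul_nonneg ha.le hb]
  have := mul_le_mul_of_nonneg_left hquad (sub_nonneg.2 hba)
  rw [hfactor] at this
  linarith

variable {K : Type*} [Field K]

lemma exists_card_linesThrough_mul_le {C w a : ℝ} {L P : Finset (K × K)} (hC : 2 ≤ C)
    (hrich : ∀ t : ℝ, 1 < t → (∀ p ∈ P, t ≤ (linesThrough L p).card) →
      P.card ≤ richBound C L.card t)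
    (hw : 0 ≤ w) (hwL : w ^ 3 = L.card) (ha : 0 < a) (haP : a ^ 3 = P.card) (hwa : w ≤ a ^ 2) :
    ∃ q ∈ P, (linesThrough L q).card * a ≤ a + 2 * C * w ^ 2 := by
  have hP : P.Nonempty := by
    rw [← Finset.card_pos, ← Nat.cast_pos (α := ℝ), ← haP]
    positivity
  obtain ⟨q, hq, hmin⟩ := Finset.exists_min_image P (fun p => (linesThrough L p).card) hP
  refine ⟨q, hq, ?_⟩
  rcases le_or_gt ((linesThrough L q).card : ℝ) 1 with hpoor | hpos
  · have : 0 ≤ 2 * C * w ^ 2 := by positivity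
    nlinarith
  · have hbound := hrich _ hpos fun p hp => Nat.cast_le.2 (hmin p hp)
    rw [← hwL, ← haP] at hbound
    linarith [mul_le_of_cube_le_richBound hC ha hw hwa (by linarith) hbound]

/- Deleting a point on fewest lines lowers `a ^ 2` by at least `1 / (2 * a)`. -/
lemma sum_card_linesThrough_le_of_richBound {C w a : ℝ} {L : Finset (K × K)} (hC : 2 ≤ C)
    (hrich : ∀ (P : Finset (K × K)) (t : ℝ), 1 < t → (∀ p ∈ P, t ≤ (linesThrough L p).card) →
      P.card ≤ richBound C L.card t)
    (hw : 0 ≤ w) (hwL : w ^ 3 = L.card) (P : Finset (K × K)) (ha : 0 ≤ a) (haP : a ^ 3 = P.card) :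
    (∑ p ∈ P, (linesThrough L p).card : ℝ) ≤
      2 * L.card + P.card + 4 * C * (w ^ 2 * a ^ 2) := by
  induction P using Finset.strongInduction generalizing a with
  | H P ih =>
  rcases le_total (P.card ^ 2) L.card with hfew | hmany
  · have hsum : (∑ p ∈ P, (linesThrough L p).card : ℝ) ≤ L.card + (P.card : ℝ) ^ 2 := by
      exact_mod_cast (sum_card_linesThrough_le_add_sq L P).trans
        (Nat.add_le_add_right (Finset.card_le_card (biUnion_linesThrough_subset L P)) _)
    have hsq : (P.card : ℝ) ^ 2 ≤ L.card := by exact_mod_cast hfew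
    have : 0 ≤ 4 * C * (w ^ 2 * a ^ 2) := by positivity
    linarith [Nat.cast_nonneg (α := ℝ) P.card]
  have hwa : w ≤ a ^ 2 := by
    refine le_of_pow_le_pow_left₀ three_ne_zero (by positivity) ?_
    rw [← pow_mul, mul_comm 2, pow_mul, hwL, haP]
    exact_mod_cast hmany
  rcases ha.eq_or_lt with rfl | ha
  · have : P = ∅ := by simpa using haP.symm
    simp only [this, Finset.sum_empty]
    positivity
  obtain ⟨q, hq, hpoor⟩ := exists_card_linesThrough_mul_le hC (hrich P) hw hwL ha haP hwa
  obtain ⟨b, hb, hbP⟩ : ∃ b : ℝ, 0 ≤ b ∧ b ^ 3 = (P.erase q).card :=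
    ⟨_, by positivity, Real.rpow_inv_natCast_pow (Nat.cast_nonneg _) three_ne_zero⟩
  have hcard : ((P.erase q).card : ℝ) + 1 = P.card := by
    exact_mod_cast Finset.card_erase_add_one hq
  have hdegree : ((linesThrough L q).card : ℝ) ≤ 1 + 4 * C * (w ^ 2 * (a ^ 2 - b ^ 2)) := by
    refine le_of_mul_le_mul_right (hpoor.trans ?_) ha
    have hhalf := half_le_sq_sub_sq_mul ha hb (by rw [haP, hbP, hcard])
    linarith [mul_le_mul_of_nonneg_left hhalf (by positivity : 0 ≤ 4 * C * w ^ 2)]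
  have hrec := ih _ (Finset.erase_ssubset hq) hb hbP
  rw [← Finset.add_sum_erase P _ hq]
  linarith

lemma rpow_inv_three_sq {x : ℝ} (hx : 0 ≤ x) : (x ^ ((3 : ℕ) : ℝ)⁻¹) ^ 2 = x ^ ((2 : ℝ) / 3) := by
  rw [← Real.rpow_mul_natCast hx]
  norm_num

theorem exists_sum_card_linesThrough_le (𝕜 : Type*) [NormedField 𝕜] [NormedAlgebra ℝ 𝕜]
    [FiniteDimensional ℝ 𝕜] :
    ∃ C : ℝ, 0 < C ∧ ∀ L P : Finset (𝕜 × 𝕜), (∑ p ∈ P, (linesThrough L p).card : ℝ) ≤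
      C * ((P.card : ℝ) ^ ((2 : ℝ) / 3) * (L.card : ℝ) ^ ((2 : ℝ) / 3)) +
        P.card + 2 * L.card := by
  obtain ⟨C, hC, hrich⟩ := exists_card_le_richBound 𝕜
  refine ⟨4 * C, by linarith, fun L P => ?_⟩
  have h := sum_card_linesThrough_le_of_richBound (by linarith) (hrich L) (by positivity)
    (Real.rpow_inv_natCast_pow (Nat.cast_nonneg L.card) three_ne_zero) P (by positivity)
    (Real.rpow_inv_natCast_pow (Nat.cast_nonneg P.card) three_ne_zero)
  rw [rpow_inv_three_sq (Nat.cast_nonneg _), rpow_inv_three_sq (Nat.cast_nonneg _)] at h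
  linarith

end Incidences

section Transfer

lemma nonempty_algHom_of_isTranscendenceBasis {ι k F E : Type*} [Field k] [Field F] [Algebra k F]
    [Field E] [Algebra k E] [IsAlgClosed E] {x : ι → F} {y : ι → E}
    (hx : IsTranscendenceBasis k x) (hy : AlgebraicIndependent k y) : Nonempty (F →ₐ[k] E) := by
  let φ : Algebra.adjoin k (Set.range x) →ₐ[k] E :=
    (MvPolynomial.aeval y).comp hx.1.aevalEquiv.symm.toAlgHom
  have hφ : Function.Injective φ := Function.Injective.comp (g := MvPolynomial.aeval y) hy
    hx.1.aevalEquiv.symm.injective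
  let := φ.toRingHom.toAlgebra
  have : IsScalarTower k (Algebra.adjoin k (Set.range x)) E :=
    .of_algebraMap_eq' φ.comp_algebraMap.symm
  have : FaithfulSMul (Algebra.adjoin k (Set.range x)) E :=
    (faithfulSMul_iff_algebraMap_injective _ _).2 hφ
  have := hx.isAlgebraic
  exact ⟨(IsAlgClosed.lift (R := Algebra.adjoin k (Set.range x))).restrictScalars k⟩

open Cardinal in
lemma nonempty_ringHom_of_countable (F E : Type*) [Field F] [CharZero F] [Countable F] [Field E]
    [CharZero E] [IsAlgClosed E] [Uncountable E] : Nonempty (F →+* E) := by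
  obtain ⟨s, hs⟩ := exists_isTranscendenceBasis ℚ F
  obtain ⟨t, ht⟩ := exists_isTranscendenceBasis ℚ E
  have hcard : #E = #t := by
    simpa using IsAlgClosed.cardinal_eq_cardinal_transcendence_basis_of_aleph0_lt _ ht mk_le_aleph0
      aleph0_lt_mk
  have : Infinite t := by
    rw [infinite_iff, ← hcard]
    exact aleph0_lt_mk.le
  obtain ⟨e⟩ := nonempty_embedding_nat s
  obtain ⟨f⟩ := nonempty_algHom_of_isTranscendenceBasis hs
    (ht.1.comp _ (e.trans (Infinite.natEmbedding t)).injective)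
  exact ⟨f.toRingHom⟩

lemma exists_injOn_map_mul_add {K E : Type*} [Field K] [CharZero K] [Field E] [CharZero E]
    [IsAlgClosed E] [Uncountable E] (T : Set K) (hT : T.Countable) :
    ∃ g : K → E, T.InjOn g ∧ ∀ x ∈ T, ∀ y ∈ T, ∀ z ∈ T, g (x * y + z) = g x * g y + g z := by
  let F := Subfield.closure T
  have hF : ∀ x ∈ T, x ∈ F := fun x hx => Subfield.subset_closure hx
  have : Countable F := by
    rw [← Cardinal.mk_le_aleph0_iff]
    exact (Subfield.cardinalMk_closure_le_max T).trans
      (max_le (Cardinal.le_aleph0_iff_set_countable.2 hT) le_rfl)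
  obtain ⟨φ⟩ := nonempty_ringHom_of_countable F E
  obtain ⟨r, hr⟩ := Subtype.val_injective (p := (· ∈ F)).hasLeftInverse
  refine ⟨φ ∘ r, fun x hx y hy hxy => ?_, fun x hx y hy z hz => ?_⟩
  · lift x to F using hF x hx
    lift y to F using hF y hy
    simp only [Function.comp_apply, hr _] at hxy
    rw [φ.injective hxy]
  · lift x to F using hF x hx
    lift y to F using hF y hy
    lift z to F using hF z hz
    norm_cast
    simp only [Function.comp_apply, hr _, map_add, map_mul]

lemma exists_sum_card_linesThrough_le_sum {K : Type*} (E : Type*) [Field K] [CharZero K] [Field E]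
    [CharZero E] [IsAlgClosed E] [Uncountable E] (L P : Finset (K × K)) :
    ∃ L' P' : Finset (E × E), L'.card = L.card ∧ P'.card = P.card ∧
      ∑ p ∈ P, (linesThrough L p).card ≤ ∑ p ∈ P', (linesThrough L' p).card := by
  let T : Finset K := (L ∪ P).image Prod.fst ∪ (L ∪ P).image Prod.snd
  have hfst : ∀ x ∈ L ∪ P, x.1 ∈ T := fun x hx =>
    Finset.mem_union_left _ (Finset.mem_image_of_mem _ hx)
  have hsnd : ∀ x ∈ L ∪ P, x.2 ∈ T := fun x hx =>
    Finset.mem_union_right _ (Finset.mem_image_of_mem _ hx)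
  obtain ⟨g, hinj, hg⟩ := exists_injOn_map_mul_add (E := E) (T : Set K) T.countable_toSet
  let G : K × K → E × E := Prod.map g g
  have hG : Set.InjOn G (L ∪ P : Finset (K × K)) := fun x hx y hy h =>
    Prod.ext (hinj (hfst x hx) (hfst y hy) (congrArg Prod.fst h))
      (hinj (hsnd x hx) (hsnd y hy) (congrArg Prod.snd h))
  have hGL : Set.InjOn G L := hG.mono (Finset.coe_subset.2 Finset.subset_union_left)
  have hGP : Set.InjOn G P := hG.mono (Finset.coe_subset.2 Finset.subset_union_right)
  refine ⟨L.image G, P.image G, Finset.card_image_of_injOn hGL, Finset.card_image_of_injOn hGP, ?_⟩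
  rw [Finset.sum_image hGP]
  refine Finset.sum_le_sum fun p hp =>
    card_linesThrough_le_of_onLine_imp hGL fun a ha hpa => ?_
  have hp' := Finset.mem_union_right L hp
  have ha' := Finset.mem_union_left P ha
  have := hg _ (hfst a ha') _ (hfst p hp') _ (hsnd a ha')
  rw [← hpa] at this
  exact this

theorem exists_sum_card_linesThrough_le_of_charZero :
    ∃ C : ℝ, 0 < C ∧ ∀ (K : Type*) [Field K] [CharZero K] (L P : Finset (K × K)),
      (∑ p ∈ P, (linesThrough L p).card : ℝ) ≤
        C * ((P.card : ℝ) ^ ((2 : ℝ) / 3) * (L.card : ℝ) ^ ((2 : ℝ) / 3)) +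
          P.card + 2 * L.card := by
  obtain ⟨C, hC, hℂ⟩ := exists_sum_card_linesThrough_le ℂ
  refine ⟨C, hC, fun K _ _ L P => ?_⟩
  have : Uncountable ℂ := Cardinal.aleph0_lt_mk_iff.1 <| by
    rw [Cardinal.mk_complex]
    exact Cardinal.aleph0_lt_continuum
  obtain ⟨L', P', hL, hP, hle⟩ := exists_sum_card_linesThrough_le_sum ℂ L P
  calc (∑ p ∈ P, (linesThrough L p).card : ℝ) ≤ ∑ p ∈ P', (linesThrough L' p).card := by
        exact_mod_cast hle
    _ ≤ _ := by
      rw [← hL, ← hP, Nat.cast_sum]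
      exact hℂ L' P'

end Transfer

section LinesAsSets

variable {K : Type} [Field K]

lemma IsLine.vertical_or_eq_setOf_onLine {l : Set (K × K)} (hl : IsLine K l) :
    (∃ x, l = {p | p.1 = x}) ∨ ∃ a, l = {p | OnLine p a} := by
  obtain ⟨a, b, c, hne, rfl⟩ := hl
  by_cases hb : b = 0
  · subst hb
    have ha : a ≠ 0 := fun h => hne (by rw [h])
    refine .inl ⟨-c / a, Set.ext fun p => ?_⟩
    simp only [Set.mem_ofPred_eq]
    rw [eq_div_iff ha]
    constructor <;> intro h <;> linear_combination h
  · refine .inr ⟨(-a / b, -c / b), Set.ext fun p => ?_⟩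
    simp only [Set.mem_ofPred_eq, OnLine]
    rw [div_mul_eq_mul_div, ← add_div, eq_div_iff hb]
    constructor <;> intro h <;> linear_combination h

lemma exists_card_incidences_le (P : Finset (K × K)) {L : Finset (Set (K × K))}
    (hL : ∀ l ∈ L, IsLine K l) :
    ∃ A : Finset (K × K), A.card ≤ L.card ∧
      ((P ×ˢ L).filter fun pl => pl.1 ∈ pl.2).card ≤ P.card + ∑ p ∈ P, (linesThrough A p).card := by
  let line : K × K → Set (K × K) := fun a => {p | OnLine p a}
  have hline : Function.Injective line := setOf_onLine_injective
  let A := L.preimage line hline.injOn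
  have hA : ∀ p ∈ P, (L.filter (p ∈ ·)).card ≤ (linesThrough A p).card + 1 := by
    intro p _
    have hsub : L.filter (p ∈ ·) ⊆ insert {q | q.1 = p.1} ((linesThrough A p).image line) := by
      intro l hl
      obtain ⟨hlL, hpl⟩ := Finset.mem_filter.1 hl
      rw [Finset.mem_insert, Finset.mem_image]
      obtain ⟨x, rfl⟩ | ⟨a, rfl⟩ := (hL l hlL).vertical_or_eq_setOf_onLine
      · exact .inl (by rw [show p.1 = x from hpl])
      · exact .inr ⟨a, mem_linesThrough.2 ⟨Finset.mem_preimage.2 hlL, hpl⟩, rfl⟩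
    exact (Finset.card_le_card hsub).trans ((Finset.card_insert_le _ _).trans
      (Nat.add_le_add_right Finset.card_image_le 1))
  refine ⟨A, Finset.card_le_card_of_injOn line (fun _ => Finset.mem_preimage.1) hline.injOn, ?_⟩
  rw [Finset.card_filter, Finset.sum_product, add_comm, Finset.card_eq_sum_ones,
    ← Finset.sum_add_distrib]
  refine Finset.sum_le_sum fun p hp => ?_
  rw [← Finset.card_filter]
  exact hA p hp

end LinesAsSets

/-- Szemerédi–Trotter over characteristic-zero fields. -/
theorem stmt3 :
    ∃ C : ℝ, 0 < C ∧
      ∀ (K : Type) [Field K] [CharZero K],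
        ∀ (P : Finset (K × K)) (L : Finset (Set (K × K))),
          (∀ l ∈ L, IsLine K l) →
          (((P ×ˢ L).filter (fun pl => pl.1 ∈ pl.2)).card : ℝ) ≤
            C * ((P.card : ℝ) ^ ((2 : ℝ) / 3) * (L.card : ℝ) ^ ((2 : ℝ) / 3)
              + P.card + L.card) := by
  obtain ⟨C, hC, hbound⟩ := exists_sum_card_linesThrough_le_of_charZero
  refine ⟨C + 2, by linarith, fun K _ _ P L hL => ?_⟩
  obtain ⟨A, hAL, hinc⟩ := exists_card_incidences_le P hL
  have hcard : (A.card : ℝ) ≤ L.card := Nat.cast_le.2 hAL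
  calc (((P ×ˢ L).filter (fun pl => pl.1 ∈ pl.2)).card : ℝ)
      ≤ P.card + ∑ p ∈ P, ((linesThrough A p).card : ℝ) := by exact_mod_cast hinc
    _ ≤ P.card + (C * ((P.card : ℝ) ^ ((2 : ℝ) / 3) * (A.card : ℝ) ^ ((2 : ℝ) / 3)) +
          P.card + 2 * A.card) := by gcongr; exact hbound K A P
    _ ≤ P.card + (C * ((P.card : ℝ) ^ ((2 : ℝ) / 3) * (L.card : ℝ) ^ ((2 : ℝ) / 3)) +
          P.card + 2 * L.card) := by gcongr
    _ ≤ (C + 2) * ((P.card : ℝ) ^ ((2 : ℝ) / 3) * (L.card : ℝ) ^ ((2 : ℝ) / 3) +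
          P.card + L.card) := by
      rw [← sub_nonneg]
      ring_nf
      positivity
end

section
/- Beck's theorem over characteristic-zero fields: there exist absolute constants c, c' > 0 such that for any field K of characteristic zero and any finite set P of points in K², letting L be the set of all lines in K² passing through at least two points of P, either some line in L contains at least c·|P| points of P, or |L| ≥ c'·|P|². -/
open scoped Classical

/-!
Represent the points of the plane over `ℝ` or `ℂ` by vectors of a three-dimensional space, so that
lines become two-dimensional subspaces. If a linear change of coordinates puts `m` of the vectors
in nearly isotropic position, meaning that `∑ cos² ∠(u, v p)` is at most `3 m / 8` for every `u`
(exact isotropy would give `m / 3`), then the sum of `cos²` over all pairs is at most `3 m² / 8`.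
But `k` vectors on a common plane contribute at least `k² / 2`, by the Welch bound, so the pairs
must be spread over many planes, at least `m² / 25` of them.

An isotropic position exists for semistable families, by almost maximizing the Kempf–Ness
functional `|det B| ^ m / ∏ ‖B (v p)‖ ^ 3` over `GL₃`: if some direction `u` is too popular,
shrinking along `u` increases the functional by a fixed factor. A basis is semistable, and so is a
disjoint union of semistable families; hence the vectors outside a maximal semistable subfamily do
not span, and the corresponding points are collinear. Either they are half of the points, or the
semistable subfamily is.

The coordinates of a finite set of points over a field of characteristic zero generate a countable
subfield, which embeds into `ℂ`, and collinearity is preserved in both directions by embeddings.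
-/

open Asymptotics Cardinal Module Submodule

lemma exists_one_lt_one_sub_mul_exp {a : ℝ} (ha : 1 < a) :
    ∃ s : ℝ, 0 < s ∧ s < 1 ∧ 1 < (1 - s) * Real.exp (a * (s - s ^ 2 / 2)) := by
  obtain ⟨s, hs⟩ : ∃ s, 2 * a * s = a - 1 := ⟨(a - 1) / (2 * a), by field_simp⟩
  have hs0 : 0 < s := by nlinarith
  have hs1 : s < 1 := by nlinarith
  refine ⟨s, hs0, hs1, ?_⟩
  calc 1 < (1 - s) * (a * (s - s ^ 2 / 2) + 1) := by
        nlinarith [mul_pos hs0 (sub_pos.2 ha), pow_pos hs0 3]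
    _ ≤ (1 - s) * Real.exp (a * (s - s ^ 2 / 2)) := by
        gcongr
        exact Real.add_one_le_exp _

lemma not_bddAbove_range_of_forall_exists_mul_le {X : Type*} [Nonempty X] {f : X → ℝ}
    (hf : ∀ x, 0 < f x) {γ : ℝ} (hγ : 1 < γ) (h : ∀ x, ∃ y, γ * f x ≤ f y) :
    ¬BddAbove (Set.range f) := by
  intro hbdd
  have hsup : 0 < ⨆ x, f x := (hf (Classical.arbitrary X)).trans_le (le_ciSup hbdd _)
  obtain ⟨x, hx⟩ := exists_lt_of_lt_ciSup (div_lt_self hsup hγ)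
  obtain ⟨y, hy⟩ := h x
  rw [div_lt_iff₀ (by linarith)] at hx
  linarith [le_ciSup hbdd y]

lemma sum_sum_eq_sum_offDiag_add {α M : Type*} [AddCommMonoid M] {S : Finset α} (f : α → α → M) :
    ∑ p ∈ S, ∑ q ∈ S, f p q = ∑ x ∈ S.offDiag, f x.1 x.2 + ∑ p ∈ S, f p p := by
  rw [← Finset.sum_product', ← Finset.diag_union_offDiag,
    Finset.sum_union (Finset.disjoint_diag_offDiag S), Finset.sum_diag, add_comm]

section ConnectingPlanes

variable {k V α : Type*} [Field k] [AddCommGroup V] [Module k V] {P Q : Finset α} {v : α → V}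

variable (k P v) in
/-- The planes spanned by two of the vectors `v p`, `p ∈ P`: the connecting lines of the points of
projective space that these vectors represent. -/
noncomputable def connectingPlanes : Finset (Submodule k V) :=
  P.offDiag.image fun x => span k {v x.1, v x.2}

lemma connectingPlanes_mono (h : Q ⊆ P) : connectingPlanes k Q v ⊆ connectingPlanes k P v :=
  Finset.image_subset_image (Finset.offDiag_mono h)

lemma card_connectingPlanes_comp_le {V' : Type*} [AddCommGroup V'] [Module k V'] (B : V →ₗ[k] V') :
    (connectingPlanes k P (B ∘ v)).card ≤ (connectingPlanes k P v).card := by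
  have h : connectingPlanes k P (B ∘ v) = (connectingPlanes k P v).image (map B) := by
    simp only [connectingPlanes, Finset.image_image, Function.comp_def, map_span, Set.image_pair]
  exact h ▸ Finset.card_image_le

lemma finrank_span_pair {x y : V} (h : LinearIndependent k ![x, y]) :
    finrank k (span k {x, y}) = 2 := by
  rw [← Matrix.range_cons_cons_empty x y ![], finrank_span_eq_card h, Fintype.card_fin]

lemma finrank_of_mem_connectingPlanes
    (hv : (P : Set α).Pairwise fun p q => LinearIndependent k ![v p, v q]) {W : Submodule k V}
    (hW : W ∈ connectingPlanes k P v) : finrank k W = 2 := by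
  obtain ⟨x, hx, rfl⟩ := Finset.mem_image.1 hW
  obtain ⟨hp, hq, hpq⟩ := Finset.mem_offDiag.1 hx
  exact finrank_span_pair (hv hp hq hpq)

lemma span_pair_eq_of_mem {W : Submodule k V} (hW : finrank k W = 2) {x y : V}
    (h : LinearIndependent k ![x, y]) (hx : x ∈ W) (hy : y ∈ W) : span k {x, y} = W := by
  have : FiniteDimensional k W := .of_finrank_pos (by omega)
  exact eq_of_le_of_finrank_eq (span_le.2 (Set.pair_subset hx hy))
    ((finrank_span_pair h).trans hW.symm)

lemma sum_offDiag_eq_sum_connectingPlanes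
    (hv : (P : Set α).Pairwise fun p q => LinearIndependent k ![v p, v q]) {M : Type*}
    [AddCommMonoid M] (f : α × α → M) :
    ∑ x ∈ P.offDiag, f x =
      ∑ W ∈ connectingPlanes k P v, ∑ x ∈ (P.filter (v · ∈ W)).offDiag, f x := by
  rw [← Finset.sum_fiberwise_of_maps_to (g := fun x : α × α => span k {v x.1, v x.2})
    (t := connectingPlanes k P v) fun _ => Finset.mem_image_of_mem _]
  refine Finset.sum_congr rfl fun W hW => Finset.sum_congr ?_ fun _ _ => rfl
  ext ⟨p, q⟩
  simp only [Finset.mem_filter, Finset.mem_offDiag]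
  refine ⟨fun ⟨⟨hp, hq, hpq⟩, hpqW⟩ => ?_, fun ⟨⟨hp, hpW⟩, ⟨hq, hqW⟩, hpq⟩ => ?_⟩
  · rw [← hpqW]
    exact ⟨⟨hp, mem_span_of_mem (by simp)⟩, ⟨hq, mem_span_of_mem (by simp)⟩, hpq⟩
  · exact ⟨⟨hp, hq, hpq⟩, span_pair_eq_of_mem (finrank_of_mem_connectingPlanes hv hW)
      (hv hp hq hpq) hpW hqW⟩

end ConnectingPlanes

section InnerProductSpace

variable {𝕜 E α ι : Type*} [RCLike 𝕜] [NormedAddCommGroup E] [InnerProductSpace 𝕜 E]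

variable (𝕜) in
/-- The squared cosine of the angle between two vectors; it depends only on the lines they span,
and it is `0` when one of them vanishes. -/
noncomputable def cosSq (u v : E) : ℝ :=
  ‖inner 𝕜 u v‖ ^ 2 / (‖u‖ ^ 2 * ‖v‖ ^ 2)

lemma cosSq_self {v : E} (hv : v ≠ 0) : cosSq 𝕜 v v = 1 := by
  have h : ‖v‖ ≠ 0 := norm_ne_zero_iff.2 hv
  rw [cosSq, inner_self_eq_norm_sq_to_K, norm_pow, RCLike.norm_ofReal, abs_norm]
  field_simp

lemma cosSq_eq_norm_inner_normalized_sq (u v : E) :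
    cosSq 𝕜 u v = ‖inner 𝕜 ((‖u‖⁻¹ : 𝕜) • u) ((‖v‖⁻¹ : 𝕜) • v)‖ ^ 2 := by
  simp only [cosSq, inner_smul_left, inner_smul_right, norm_mul, RCLike.norm_conj, norm_inv,
    RCLike.norm_ofReal, abs_norm]
  ring

lemma inner_mul_inner_symm (u v : E) :
    inner 𝕜 u v * inner 𝕜 v u = ((‖inner 𝕜 u v‖ ^ 2 : ℝ) : 𝕜) := by
  rw [← inner_conj_symm v u, RCLike.mul_conj, RCLike.ofReal_pow]

section Welch

variable [FiniteDimensional 𝕜 E] [Fintype ι]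

-- The right-hand side is `finrank 𝕜 E * tr A²` and the left-hand side `(tr A)²` for the frame
-- operator `A x = ∑ i, ⟪w i, x⟫ • w i`, so this is Cauchy–Schwarz for the eigenvalues of `A`.
lemma sq_sum_norm_sq_le_finrank_mul_sum_norm_inner_sq (w : ι → E) :
    (∑ i, ‖w i‖ ^ 2) ^ 2 ≤ finrank 𝕜 E * ∑ i, ∑ j, ‖inner 𝕜 (w i) (w j)‖ ^ 2 := by
  let e := stdOrthonormalBasis 𝕜 E
  let A : E → E := fun x => ∑ i, inner 𝕜 (w i) x • w i
  have trace_A : ∑ i, ‖w i‖ ^ 2 = ∑ k, ∑ i, ‖inner 𝕜 (e k) (w i)‖ ^ 2 := by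
    rw [Finset.sum_comm]
    simp only [e.sum_sq_norm_inner_right]
  have diagonal_le (k) : ∑ i, ‖inner 𝕜 (e k) (w i)‖ ^ 2 ≤ ‖A (e k)‖ := by
    have h : inner 𝕜 (e k) (A (e k)) = ((∑ i, ‖inner 𝕜 (e k) (w i)‖ ^ 2 : ℝ) : 𝕜) := by
      simp only [A, inner_sum, inner_smul_right, inner_mul_inner_symm]
      rw [RCLike.ofReal_sum]
      simp only [norm_inner_symm]
    have h_le := norm_inner_le_norm (𝕜 := 𝕜) (e k) (A (e k))
    rwa [h, RCLike.norm_ofReal, abs_of_nonneg (by positivity), e.norm_eq_one, one_mul] at h_le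
  have trace_A_sq : ∑ k, ‖A (e k)‖ ^ 2 = ∑ i, ∑ j, ‖inner 𝕜 (w i) (w j)‖ ^ 2 := by
    have h : ∑ k, inner 𝕜 (A (e k)) (A (e k))
        = ∑ i, ∑ j, inner 𝕜 (w i) (w j) * inner 𝕜 (w j) (w i) := by
      calc ∑ k, inner 𝕜 (A (e k)) (A (e k))
          = ∑ k, ∑ i, ∑ j, inner 𝕜 (w i) (w j) *
              (inner 𝕜 (w j) (e k) * inner 𝕜 (e k) (w i)) := by
            simp only [A, sum_inner, inner_sum, inner_smul_left, inner_smul_right, inner_conj_symm,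
              Finset.mul_sum]
            refine Finset.sum_congr rfl fun k _ => Finset.sum_comm.trans ?_
            exact Finset.sum_congr rfl fun i _ => Finset.sum_congr rfl fun j _ => by ring
        _ = ∑ i, ∑ j, inner 𝕜 (w i) (w j) * inner 𝕜 (w j) (w i) := by
            rw [Finset.sum_comm]
            refine Finset.sum_congr rfl fun i _ => ?_
            rw [Finset.sum_comm]
            simp only [← Finset.mul_sum, e.sum_inner_mul_inner]
    simp only [inner_self_eq_norm_sq_to_K, inner_mul_inner_symm] at h
    exact_mod_cast h
  rw [trace_A, ← trace_A_sq]
  calc (∑ k, ∑ i, ‖inner 𝕜 (e k) (w i)‖ ^ 2) ^ 2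
      ≤ (∑ k, ‖A (e k)‖) ^ 2 := by gcongr with k; exact diagonal_le k
    _ ≤ finrank 𝕜 E * ∑ k, ‖A (e k)‖ ^ 2 := by
        simpa using sq_sum_le_card_mul_sum_sq (s := Finset.univ) (f := fun k => ‖A (e k)‖)

lemma card_sq_le_finrank_mul_sum_cosSq {v : ι → E} (hv : ∀ i, v i ≠ 0) :
    (Fintype.card ι : ℝ) ^ 2 ≤ finrank 𝕜 E * ∑ i, ∑ j, cosSq 𝕜 (v i) (v j) := by
  simpa only [cosSq_eq_norm_inner_normalized_sq, norm_smul_inv_norm (hv _), one_pow,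
    Finset.sum_const, Finset.card_univ, nsmul_eq_mul, mul_one] using
    sq_sum_norm_sq_le_finrank_mul_sum_norm_inner_sq (𝕜 := 𝕜) fun i => (‖v i‖⁻¹ : 𝕜) • v i

end Welch

lemma card_sq_le_finrank_mul_sum_cosSq_of_mem {v : α → E} {W : Submodule 𝕜 E}
    [FiniteDimensional 𝕜 W] {S : Finset α} (hv : ∀ p ∈ S, v p ≠ 0) (hW : ∀ p ∈ S, v p ∈ W) :
    (S.card : ℝ) ^ 2 ≤ finrank 𝕜 W * ∑ p ∈ S, ∑ q ∈ S, cosSq 𝕜 (v p) (v q) := by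
  have h := card_sq_le_finrank_mul_sum_cosSq (𝕜 := 𝕜) (v := fun p : S => (⟨v p, hW p p.2⟩ : W))
    fun p => by simpa using hv p p.2
  rw [Fintype.card_coe] at h
  refine h.trans_eq ?_
  rw [← Finset.sum_coe_sort S]
  simp only [← Finset.sum_coe_sort S fun q => cosSq 𝕜 (v _) (v q)]
  rfl

section Shrink

variable (𝕜) in
/-- The linear map that multiplies `u` by `1 - s` and fixes its orthogonal complement. -/
noncomputable def shrinkAlong (u : E) (s : ℝ) : E →ₗ[𝕜] E :=
  LinearMap.transvection (-((s / ‖u‖ ^ 2 : ℝ) : 𝕜) • innerₛₗ 𝕜 u) u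

lemma det_shrinkAlong [FiniteDimensional 𝕜 E] {u : E} (hu : u ≠ 0) (s : ℝ) :
    LinearMap.det (shrinkAlong 𝕜 u s) = ((1 - s : ℝ) : 𝕜) := by
  have h : (‖u‖ : 𝕜) ≠ 0 := by simpa using hu
  rw [shrinkAlong, LinearMap.transvection.det]
  simp only [LinearMap.smul_apply, innerₛₗ_apply_apply, inner_self_eq_norm_sq_to_K, smul_eq_mul]
  push_cast
  field_simp
  ring

lemma norm_shrinkAlong_sq (u x : E) (s : ℝ) :
    ‖shrinkAlong 𝕜 u s x‖ ^ 2 = ‖x‖ ^ 2 * (1 - 2 * (s - s ^ 2 / 2) * cosSq 𝕜 u x) := by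
  rcases eq_or_ne u 0 with rfl | hu
  · simp [shrinkAlong, cosSq]
  rcases eq_or_ne x 0 with rfl | hx
  · simp
  have hu' : ‖u‖ ≠ 0 := norm_ne_zero_iff.2 hu
  have hx' : ‖x‖ ≠ 0 := norm_ne_zero_iff.2 hx
  have h : shrinkAlong 𝕜 u s x = x - (((s / ‖u‖ ^ 2 : ℝ) : 𝕜) * inner 𝕜 u x) • u := by
    simp [shrinkAlong, LinearMap.transvection.apply, sub_eq_add_neg]
  have cross : RCLike.re (inner 𝕜 x ((((s / ‖u‖ ^ 2 : ℝ) : 𝕜) * inner 𝕜 u x) • u))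
      = s / ‖u‖ ^ 2 * ‖inner 𝕜 u x‖ ^ 2 := by
    rw [inner_smul_right, ← inner_conj_symm x u, mul_assoc, RCLike.mul_conj, RCLike.re_ofReal_mul]
    norm_cast
  rw [h, @norm_sub_sq 𝕜, cross, norm_smul, norm_mul, RCLike.norm_ofReal, mul_pow, mul_pow, sq_abs,
    cosSq]
  field_simp
  ring

lemma norm_shrinkAlong_le (u x : E) (s : ℝ) :
    ‖shrinkAlong 𝕜 u s x‖ ≤ ‖x‖ * Real.exp (-(s - s ^ 2 / 2) * cosSq 𝕜 u x) := by
  refine le_of_sq_le_sq ?_ (by positivity)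
  rw [norm_shrinkAlong_sq, mul_pow, ← Real.exp_nat_mul]
  gcongr
  linarith [Real.add_one_le_exp ((2 : ℕ) * (-(s - s ^ 2 / 2) * cosSq 𝕜 u x))]

end Shrink

section Semistable

/-- Semistability, in the sense of geometric invariant theory, of the vectors `v p`, `p ∈ P`:
the functional `|det B| ^ #P / ∏ p ∈ P, ‖B (v p)‖ ^ dim E` is bounded on `GL(E)`. Written as
`O(⊤)` over all endomorphisms, the bound needs no division. -/
def IsSemistable (𝕜 : Type*) {E α : Type*} [RCLike 𝕜] [NormedAddCommGroup E]
    [InnerProductSpace 𝕜 E] (P : Finset α) (v : α → E) : Prop :=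
  (fun B : E →ₗ[𝕜] E => LinearMap.det B ^ P.card) =O[⊤]
    fun B => ∏ p ∈ P, ‖B (v p)‖ ^ finrank 𝕜 E

variable {P Q : Finset α} {v : α → E}

lemma isSemistable_empty : IsSemistable 𝕜 ∅ v := by
  refine isBigO_of_le _ fun B => ?_
  simp

lemma IsSemistable.union_of_disjoint (hP : IsSemistable 𝕜 P v) (hQ : IsSemistable 𝕜 Q v)
    (h : Disjoint P Q) : IsSemistable 𝕜 (P ∪ Q) v := by
  simpa only [IsSemistable, Finset.card_union_of_disjoint h, pow_add, Finset.prod_union h]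
    using hP.mul hQ

lemma IsSemistable.ne_zero (h : IsSemistable 𝕜 P v) (hE : finrank 𝕜 E ≠ 0) {p : α}
    (hp : p ∈ P) : v p ≠ 0 := by
  intro hvp
  obtain ⟨C, hC⟩ := isBigO_top.1 h
  have hprod : ∏ q ∈ P, ‖v q‖ ^ finrank 𝕜 E = 0 := Finset.prod_eq_zero hp (by simp [hvp, hE])
  have := hC LinearMap.id
  norm_num [hprod] at this

section FiniteDimensional

variable [FiniteDimensional 𝕜 E]

lemma isBigO_det_basis [Fintype ι] (b : Basis ι 𝕜 E) :
    (fun B : E →ₗ[𝕜] E => LinearMap.det B) =O[⊤] fun B => ∏ i, ‖B (b i)‖ := by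
  have hcont : Continuous b.det := by
    change Continuous fun v : ι → E => (b.toMatrix v).det
    exact Continuous.matrix_det (continuous_matrix fun i j =>
      (b.coord i).continuous_of_finiteDimensional.comp (continuous_apply j))
  obtain ⟨C, -, hC⟩ := b.det.exists_bound_of_continuous hcont
  refine isBigO_top.2 ⟨C, fun B => ?_⟩
  simpa [b.det_comp, b.det_self, norm_prod] using hC (B ∘ b)

lemma isSemistable_map_of_basis [Fintype ι] (b : Basis ι 𝕜 E) (a : ι ↪ α)
    (hb : ∀ i, b i = v (a i)) : IsSemistable 𝕜 (Finset.univ.map a) v := by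
  simpa only [IsSemistable, Finset.card_map, Finset.card_univ, Finset.prod_map, ← hb,
    Finset.prod_pow, finrank_eq_card_basis b] using (isBigO_det_basis b).pow (Fintype.card ι)

lemma exists_isSemistable_of_span_eq_top (hE : finrank 𝕜 E ≠ 0) (h : span 𝕜 (v '' P) = ⊤) :
    ∃ Q ⊆ P, Q.Nonempty ∧ IsSemistable 𝕜 Q v := by
  obtain ⟨ι, a, ha, hspan, hli⟩ := exists_linearIndependent' 𝕜 (v ∘ Subtype.val : P → E)
  rw [Set.range_comp v Subtype.val, Subtype.range_coe, h] at hspan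
  let b : Basis ι 𝕜 E := Basis.mk hli hspan.ge
  have : Fintype ι := FiniteDimensional.fintypeBasisIndex b
  have : Nonempty ι := Fintype.card_pos_iff.1 (finrank_eq_card_basis b ▸ Nat.pos_of_ne_zero hE)
  let a' : ι ↪ α := ⟨fun i => a i, Subtype.val_injective.comp ha⟩
  refine ⟨Finset.univ.map a', fun p hp => ?_, by simp, isSemistable_map_of_basis b a' fun i => ?_⟩
  · obtain ⟨i, -, rfl⟩ := Finset.mem_map.1 hp
    exact (a i).2
  · simp [b, a']

lemma exists_isSemistable_span_sdiff_ne_top (hE : finrank 𝕜 E ≠ 0) (P : Finset α) (v : α → E) :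
    ∃ Q ⊆ P, IsSemistable 𝕜 Q v ∧ span 𝕜 (v '' (P \ Q : Finset α)) ≠ ⊤ := by
  obtain ⟨Q, hQ, hmax⟩ := (P.powerset.filter (IsSemistable 𝕜 · v)).exists_max_image Finset.card
    ⟨∅, by simp [isSemistable_empty]⟩
  rw [Finset.mem_filter, Finset.mem_powerset] at hQ
  refine ⟨Q, hQ.1, hQ.2, fun hspan => ?_⟩
  obtain ⟨R, hRP, hR, hRs⟩ := exists_isSemistable_of_span_eq_top hE hspan
  have hdisj : Disjoint Q R := Finset.disjoint_sdiff.mono_right hRP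
  have hle := hmax (Q ∪ R) <| Finset.mem_filter.2
    ⟨Finset.mem_powerset.2 (Finset.union_subset hQ.1 (hRP.trans Finset.sdiff_subset)),
      hQ.2.union_of_disjoint hRs hdisj⟩
  rw [Finset.card_union_of_disjoint hdisj] at hle
  have := hR.card_pos
  omega

end FiniteDimensional

end Semistable

section KempfNess

variable {P : Finset α} {v : α → E}

variable (𝕜 P v) in
/-- The functional on `GL(E)` whose boundedness is semistability; its critical points put `v` in
isotropic position. -/
noncomputable def kempfNess (B : E →ₗ[𝕜] E) : ℝ :=
  ‖LinearMap.det B‖ ^ P.card / ∏ p ∈ P, ‖B (v p)‖ ^ finrank 𝕜 E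

lemma prod_norm_shrinkAlong_pow_le (n : ℕ) (u : E) (s : ℝ) :
    ∏ p ∈ P, ‖shrinkAlong 𝕜 u s (v p)‖ ^ n ≤
      (∏ p ∈ P, ‖v p‖ ^ n) * Real.exp (-(n * (s - s ^ 2 / 2) * ∑ p ∈ P, cosSq 𝕜 u (v p))) := by
  calc ∏ p ∈ P, ‖shrinkAlong 𝕜 u s (v p)‖ ^ n
      ≤ ∏ p ∈ P, (‖v p‖ * Real.exp (-(s - s ^ 2 / 2) * cosSq 𝕜 u (v p))) ^ n := by
        gcongr with p
        exact norm_shrinkAlong_le u (v p) s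
    _ = (∏ p ∈ P, ‖v p‖ ^ n) *
          Real.exp (-(n * (s - s ^ 2 / 2) * ∑ p ∈ P, cosSq 𝕜 u (v p))) := by
        simp only [mul_pow, ← Real.exp_nat_mul, Finset.prod_mul_distrib, ← Real.exp_sum,
          Finset.mul_sum, ← Finset.sum_neg_distrib]
        congr! 3
        ring

lemma IsSemistable.bddAbove_range_kempfNess (h : IsSemistable 𝕜 P v) :
    BddAbove (Set.range (kempfNess 𝕜 P v)) := by
  obtain ⟨C, hC0, hC⟩ := h.exists_nonneg
  refine ⟨C, ?_⟩
  rintro _ ⟨B, rfl⟩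
  refine div_le_of_le_mul₀ (by positivity) hC0 ?_
  simpa using isBigOWith_top.1 hC B

lemma kempfNess_pos {B : E →ₗ[𝕜] E} (hB : LinearMap.det B ≠ 0) (hv : ∀ p ∈ P, B (v p) ≠ 0) :
    0 < kempfNess 𝕜 P v B :=
  div_pos (pow_pos (norm_pos_iff.2 hB) _) <|
    Finset.prod_pos fun p hp => pow_pos (norm_pos_iff.2 (hv p hp)) _

lemma exp_pow_card_mul_prod_norm_shrinkAlong_le (n : ℕ) {u : E} {s c : ℝ} (hs0 : 0 ≤ s)
    (hs1 : s ≤ 1) (hc : c * P.card ≤ ∑ p ∈ P, cosSq 𝕜 u (v p)) :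
    Real.exp (n * c * (s - s ^ 2 / 2)) ^ P.card * ∏ p ∈ P, ‖shrinkAlong 𝕜 u s (v p)‖ ^ n ≤
      ∏ p ∈ P, ‖v p‖ ^ n := by
  have hσ : 0 ≤ s - s ^ 2 / 2 := by nlinarith
  calc Real.exp (n * c * (s - s ^ 2 / 2)) ^ P.card * ∏ p ∈ P, ‖shrinkAlong 𝕜 u s (v p)‖ ^ n
      ≤ Real.exp (n * c * (s - s ^ 2 / 2)) ^ P.card *
          ((∏ p ∈ P, ‖v p‖ ^ n) * Real.exp (-(n * (s - s ^ 2 / 2) * (c * P.card)))) := by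
        gcongr
        refine (prod_norm_shrinkAlong_pow_le n u s).trans ?_
        gcongr
    _ = ∏ p ∈ P, ‖v p‖ ^ n := by
        rw [mul_left_comm, ← Real.exp_nat_mul, ← Real.exp_add]
        ring_nf
        simp only [Real.exp_zero, mul_one]

variable [FiniteDimensional 𝕜 E]

lemma mul_kempfNess_le_kempfNess_shrinkAlong_comp {B : E →ₗ[𝕜] E} {u : E} (hu : u ≠ 0) {s c : ℝ}
    (hs0 : 0 ≤ s) (hs1 : s < 1) (hv : ∀ p ∈ P, shrinkAlong 𝕜 u s (B (v p)) ≠ 0)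
    (hc : c * P.card ≤ ∑ p ∈ P, cosSq 𝕜 u (B (v p))) :
    ((1 - s) * Real.exp (finrank 𝕜 E * c * (s - s ^ 2 / 2))) ^ P.card * kempfNess 𝕜 P v B ≤
      kempfNess 𝕜 P v (shrinkAlong 𝕜 u s ∘ₗ B) := by
  have hprod := exp_pow_card_mul_prod_norm_shrinkAlong_le (finrank 𝕜 E) hs0 hs1.le hc
  have hpos : 0 < ∏ p ∈ P, ‖shrinkAlong 𝕜 u s (B (v p))‖ ^ finrank 𝕜 E :=
    Finset.prod_pos fun p hp => pow_pos (norm_pos_iff.2 (hv p hp)) _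
  have hs : 0 < 1 - s := sub_pos.2 hs1
  have hdet : ‖LinearMap.det (shrinkAlong 𝕜 u s ∘ₗ B)‖ = (1 - s) * ‖LinearMap.det B‖ := by
    rw [LinearMap.det_comp, det_shrinkAlong hu, norm_mul, RCLike.norm_ofReal, abs_of_pos hs]
  simp only [kempfNess, hdet, LinearMap.comp_apply]
  set e := Real.exp (finrank 𝕜 E * c * (s - s ^ 2 / 2))
  set X := ∏ p ∈ P, ‖B (v p)‖ ^ finrank 𝕜 E
  rw [le_div_iff₀ hpos]
  calc ((1 - s) * e) ^ P.card * (‖LinearMap.det B‖ ^ P.card / X) *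
        ∏ p ∈ P, ‖shrinkAlong 𝕜 u s (B (v p))‖ ^ finrank 𝕜 E
      = ((1 - s) * ‖LinearMap.det B‖) ^ P.card *
          ((e ^ P.card * ∏ p ∈ P, ‖shrinkAlong 𝕜 u s (B (v p))‖ ^ finrank 𝕜 E) / X) := by
        rw [mul_pow, mul_pow]
        ring
    _ ≤ ((1 - s) * ‖LinearMap.det B‖) ^ P.card * 1 := by
        gcongr
        exact div_le_one_of_le₀ hprod (by positivity)
    _ = ((1 - s) * ‖LinearMap.det B‖) ^ P.card := mul_one _

lemma IsSemistable.exists_forall_sum_cosSq_le (h : IsSemistable 𝕜 P v) {c : ℝ}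
    (hc : 1 < finrank 𝕜 E * c) :
    ∃ B : E ≃ₗ[𝕜] E, ∀ u, ∑ p ∈ P, cosSq 𝕜 u (B (v p)) ≤ c * P.card := by
  rcases P.eq_empty_or_nonempty with rfl | hP
  · exact ⟨LinearEquiv.refl 𝕜 E, by simp⟩
  have hE : finrank 𝕜 E ≠ 0 := fun h0 => by norm_num [h0] at hc
  have hc0 : 0 ≤ c := by
    by_contra! hneg
    nlinarith [(finrank 𝕜 E).cast_nonneg (α := ℝ)]
  obtain ⟨s, hs0, hs1, hgain⟩ := exists_one_lt_one_sub_mul_exp hc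
  by_contra! hlarge
  let F : (E ≃ₗ[𝕜] E) → ℝ := fun B => kempfNess 𝕜 P v B
  have hv (B : E ≃ₗ[𝕜] E) (p) (hp : p ∈ P) : B (v p) ≠ 0 :=
    B.map_ne_zero_iff.2 (h.ne_zero hE hp)
  refine not_bddAbove_range_of_forall_exists_mul_le (f := F)
    (fun B => kempfNess_pos B.isUnit_det'.ne_zero (hv B))
    (one_lt_pow₀ hgain hP.card_ne_zero) (fun B => ?_)
    (h.bddAbove_range_kempfNess.mono ?_)
  · obtain ⟨u, hu⟩ := hlarge B
    have hu0 : u ≠ 0 := by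
      rintro rfl
      have hcP : 0 ≤ c * P.card := by positivity
      exact hu.not_ge (by simpa [cosSq] using hcP)
    have hdet : LinearMap.det (shrinkAlong 𝕜 u s) ≠ 0 := by
      rw [det_shrinkAlong hu0]
      exact_mod_cast (sub_pos.2 hs1).ne'
    let B' := B.trans (LinearMap.equivOfDetNeZero (shrinkAlong 𝕜 u s) hdet)
    exact ⟨B', mul_kempfNess_le_kempfNess_shrinkAlong_comp hu0 hs0.le hs1 (hv B') hu.le⟩
  · rintro _ ⟨B, rfl⟩
    exact ⟨B, rfl⟩

end KempfNess

lemma card_sq_le_card_connectingPlanes_of_sum_cosSq_le {Q : Finset α} {v : α → E}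
    (hv0 : ∀ p ∈ Q, v p ≠ 0)
    (hv : (Q : Set α).Pairwise fun p q => LinearIndependent 𝕜 ![v p, v q])
    (hsum : ∀ p ∈ Q, ∑ q ∈ Q, cosSq 𝕜 (v p) (v q) ≤ 3 / 8 * Q.card) :
    (Q.card : ℝ) ^ 2 ≤ 25 * (connectingPlanes 𝕜 Q v).card := by
  have sum_eq (S : Finset α) (hS : S ⊆ Q) : ∑ p ∈ S, ∑ q ∈ S, cosSq 𝕜 (v p) (v q) =
      ∑ x ∈ S.offDiag, cosSq 𝕜 (v x.1) (v x.2) + S.card := by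
    rw [sum_sum_eq_sum_offDiag_add fun p q => cosSq 𝕜 (v p) (v q),
      Finset.sum_congr rfl fun p hp => cosSq_self (hv0 p (hS hp))]
    simp
  have card_sq_eq (S : Finset α) : (S.card : ℝ) ^ 2 = S.offDiag.card + S.card := by
    simpa [sq] using sum_sum_eq_sum_offDiag_add (S := S) fun _ _ => (1 : ℝ)
  -- `k` of the points on one plane contribute at least `k ^ 2 / 2 - k` to the sum over `offDiag`.
  -- The slope `5 / 12` lies between `3 / 8` and `1 / 2`: this beats the isotropy bound, and the
  -- error is bounded on each plane independently of `k`.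
  have plane_le (W) (hW : W ∈ connectingPlanes 𝕜 Q v) :
      5 / 12 * ∑ _x ∈ (Q.filter (v · ∈ W)).offDiag, (1 : ℝ) - 25 / 24 ≤
        ∑ x ∈ (Q.filter (v · ∈ W)).offDiag, cosSq 𝕜 (v x.1) (v x.2) := by
    have hrank := finrank_of_mem_connectingPlanes hv hW
    have : FiniteDimensional 𝕜 W := .of_finrank_pos (by omega)
    set S := Q.filter (v · ∈ W)
    have h := card_sq_le_finrank_mul_sum_cosSq_of_mem (𝕜 := 𝕜) (S := S) (v := v) (W := W)
      (fun p hp => hv0 p (Finset.mem_filter.1 hp).1) fun p hp => (Finset.mem_filter.1 hp).2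
    rw [hrank, sum_eq S (Finset.filter_subset _ _), Nat.cast_ofNat] at h
    rw [Finset.sum_const, nsmul_eq_mul, mul_one]
    nlinarith [card_sq_eq S, sq_nonneg ((S.card : ℝ) - 7 / 2)]
  have hplanes := Finset.sum_le_sum plane_le
  rw [Finset.sum_sub_distrib, ← Finset.mul_sum, ← sum_offDiag_eq_sum_connectingPlanes hv,
    ← sum_offDiag_eq_sum_connectingPlanes hv] at hplanes
  simp only [Finset.sum_const, nsmul_eq_mul, mul_one] at hplanes
  have htotal := Finset.sum_le_sum hsum
  rw [sum_eq Q subset_rfl, Finset.sum_const, nsmul_eq_mul] at htotal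
  linarith [card_sq_eq Q, (Q.card).cast_nonneg (α := ℝ)]

theorem exists_proper_submodule_or_card_sq_le_card_connectingPlanes [FiniteDimensional 𝕜 E]
    (hE : 3 ≤ finrank 𝕜 E) {P : Finset α} {v : α → E}
    (hv : (P : Set α).Pairwise fun p q => LinearIndependent 𝕜 ![v p, v q]) :
    (∃ H : Submodule 𝕜 E, H ≠ ⊤ ∧ (P.card : ℝ) ≤ 2 * (P.filter (v · ∈ H)).card) ∨
      (P.card : ℝ) ^ 2 ≤ 100 * (connectingPlanes 𝕜 P v).card := by
  have hE0 : finrank 𝕜 E ≠ 0 := by omega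
  obtain ⟨Q, hQP, hQ, hspan⟩ := exists_isSemistable_span_sdiff_ne_top hE0 P v
  have hcard : ((P \ Q).card : ℝ) + Q.card = P.card := by
    exact_mod_cast Finset.card_sdiff_add_card_eq_card hQP
  by_cases hlarge : (P.card : ℝ) ≤ 2 * (P \ Q).card
  · refine Or.inl ⟨_, hspan, hlarge.trans ?_⟩
    gcongr
    exact fun p hp => Finset.mem_filter.2
      ⟨Finset.sdiff_subset hp, subset_span (Set.mem_image_of_mem v hp)⟩
  right
  have hdim : 1 < (finrank 𝕜 E : ℝ) * (3 / 8) := by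
    have : (3 : ℝ) ≤ finrank 𝕜 E := by exact_mod_cast hE
    linarith
  obtain ⟨B, hB⟩ := hQ.exists_forall_sum_cosSq_le hdim
  have hvB : (Q : Set α).Pairwise fun p q => LinearIndependent 𝕜 ![B (v p), B (v q)] :=
    (hv.mono hQP).imp fun p q h => by
      have hcomp : B ∘ ![v p, v q] = ![B (v p), B (v q)] := by
        ext i
        fin_cases i <;> rfl
      exact hcomp ▸ h.map' B.toLinearMap B.ker
  have hcount : (Q.card : ℝ) ^ 2 ≤ 25 * (connectingPlanes 𝕜 Q (B ∘ v)).card :=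
    card_sq_le_card_connectingPlanes_of_sum_cosSq_le
      (fun p hp => B.map_ne_zero_iff.2 (hQ.ne_zero hE0 hp))
      hvB fun p _ => hB (B (v p))
  have hmono : ((connectingPlanes 𝕜 Q (B ∘ v)).card : ℝ) ≤ (connectingPlanes 𝕜 P v).card := by
    exact_mod_cast (card_connectingPlanes_comp_le B.toLinearMap).trans
      (Finset.card_le_card (connectingPlanes_mono hQP))
  nlinarith

end InnerProductSpace

section Plane

variable {K : Type} [Field K] {p q r : K × K} {l : Set (K × K)}

/-- The line through `p` and `q`; it is the whole plane if `p = q`. -/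
def lineThrough (p q : K × K) : Set (K × K) :=
  {r | (q.1 - p.1) * (r.2 - p.2) = (q.2 - p.2) * (r.1 - p.1)}

lemma left_mem_lineThrough : p ∈ lineThrough p q := by
  simp [lineThrough]

lemma right_mem_lineThrough : q ∈ lineThrough p q :=
  mul_comm _ _

lemma isLine_lineThrough (hpq : p ≠ q) : IsLine K (lineThrough p q) := by
  refine ⟨-(q.2 - p.2), q.1 - p.1, (q.2 - p.2) * p.1 - (q.1 - p.1) * p.2, fun h => hpq ?_, ?_⟩
  · simp only [Prod.mk.injEq, neg_eq_zero, sub_eq_zero] at h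
    exact Prod.ext h.2.symm h.1.symm
  · ext r
    simp only [lineThrough, Set.mem_ofPred_eq]
    constructor <;> intro h <;> linear_combination h

lemma exists_affine_combination_of_mem_lineThrough (hpq : p ≠ q) (hr : r ∈ lineThrough p q) :
    ∃ t : K, r = (1 - t) • p + t • q := by
  simp only [Prod.ext_iff, Prod.fst_add, Prod.snd_add, Prod.smul_fst, Prod.smul_snd, smul_eq_mul]
  change (q.1 - p.1) * (r.2 - p.2) = (q.2 - p.2) * (r.1 - p.1) at hr
  by_cases h1 : q.1 - p.1 = 0
  · have h2 : q.2 - p.2 ≠ 0 := fun h2 =>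
      hpq (Prod.ext (sub_eq_zero.1 h1).symm (sub_eq_zero.1 h2).symm)
    refine ⟨(r.2 - p.2) / (q.2 - p.2), ?_, ?_⟩ <;> field_simp
    · linear_combination -hr
    · ring
  · refine ⟨(r.1 - p.1) / (q.1 - p.1), ?_, ?_⟩ <;> field_simp
    · ring
    · linear_combination hr

lemma IsLine.eq_lineThrough (hl : IsLine K l) (hpq : p ≠ q) (hp : p ∈ l) (hq : q ∈ l) :
    l = lineThrough p q := by
  obtain ⟨a, b, c, hab, rfl⟩ := hl
  simp only [Set.mem_ofPred_eq] at hp hq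
  ext r
  refine ⟨fun hr => ?_, fun hr => ?_⟩
  · simp only [Set.mem_ofPred_eq] at hr
    have ha : a * ((q.1 - p.1) * (r.2 - p.2) - (q.2 - p.2) * (r.1 - p.1)) = 0 := by
      linear_combination (r.2 - p.2) * (hq - hp) - (q.2 - p.2) * (hr - hp)
    have hb : b * ((q.1 - p.1) * (r.2 - p.2) - (q.2 - p.2) * (r.1 - p.1)) = 0 := by
      linear_combination (q.1 - p.1) * (hr - hp) - (r.1 - p.1) * (hq - hp)
    by_contra hne
    have hne' := sub_ne_zero.2 hne
    exact hab (Prod.ext ((mul_eq_zero.1 ha).resolve_right hne')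
      ((mul_eq_zero.1 hb).resolve_right hne'))
  · obtain ⟨t, rfl⟩ := exists_affine_combination_of_mem_lineThrough hpq hr
    simp only [Set.mem_ofPred_eq, Prod.fst_add, Prod.snd_add, Prod.smul_fst, Prod.smul_snd,
      smul_eq_mul]
    linear_combination (1 - t) * hp + t * hq

lemma exists_isLine_mem (p : K × K) : ∃ l, IsLine K l ∧ p ∈ l :=
  ⟨_, ⟨1, 0, -p.1, by simp, rfl⟩, by simp⟩

/-- The lines through at least two points of `P`. -/
noncomputable def connectingLines (P : Finset (K × K)) : Finset (Set (K × K)) :=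
  P.offDiag.image fun x => lineThrough x.1 x.2

lemma lineThrough_mem_connectingLines {P : Finset (K × K)} (hp : p ∈ P) (hq : q ∈ P)
    (hpq : p ≠ q) : lineThrough p q ∈ connectingLines P :=
  Finset.mem_image.2 ⟨(p, q), Finset.mem_offDiag.2 ⟨hp, hq, hpq⟩, rfl⟩

lemma mem_connectingLines {P : Finset (K × K)} :
    l ∈ connectingLines P ↔ IsLine K l ∧ ∃ p ∈ P, ∃ q ∈ P, p ≠ q ∧ p ∈ l ∧ q ∈ l := by
  constructor
  · intro hl
    obtain ⟨x, hx, rfl⟩ := Finset.mem_image.1 hl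
    obtain ⟨hp, hq, hpq⟩ := Finset.mem_offDiag.1 hx
    exact ⟨isLine_lineThrough hpq, _, hp, _, hq, hpq, left_mem_lineThrough,
      right_mem_lineThrough⟩
  · rintro ⟨hl, p, hp, q, hq, hpq, hpl, hql⟩
    exact hl.eq_lineThrough hpq hpl hql ▸ lineThrough_mem_connectingLines hp hq hpq

lemma natCard_isLine_eq_card_connectingLines (P : Finset (K × K)) :
    Nat.card {l : Set (K × K) // IsLine K l ∧ ∃ p ∈ P, ∃ q ∈ P, p ≠ q ∧ p ∈ l ∧ q ∈ l} =
      (connectingLines P).card := by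
  rw [← Nat.card_eq_finsetCard]
  exact Nat.card_congr (Equiv.subtypeEquivRight fun l => mem_connectingLines.symm)

/-- The conclusion of Beck's theorem for the set `P`, with constants `c` and `c'`. -/
def BeckAlternative (c c' : ℝ) (P : Finset (K × K)) : Prop :=
  (∃ l : Set (K × K), IsLine K l ∧ c * (P.card : ℝ) ≤ ((P.filter (fun p => p ∈ l)).card : ℝ)) ∨
    c' * (P.card : ℝ) ^ 2 ≤ (connectingLines P).card

end Plane

section Homogeneous

variable {𝕜 : Type} [RCLike 𝕜] {p q : 𝕜 × 𝕜} {P : Finset (𝕜 × 𝕜)}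

/-- Homogeneous coordinates of a point of the affine plane, identifying lines of the plane with
planes through the origin in `𝕜³`. -/
noncomputable def homogeneous (p : 𝕜 × 𝕜) : EuclideanSpace 𝕜 (Fin 3) :=
  !₂[p.1, p.2, 1]

lemma linearIndependent_homogeneous (hpq : p ≠ q) :
    LinearIndependent 𝕜 ![homogeneous p, homogeneous q] := by
  refine LinearIndependent.pair_iff.2 fun s t h => ?_
  have coord (i : Fin 3) := congrArg (fun x : EuclideanSpace 𝕜 (Fin 3) => x i) h
  have h0 : s * p.1 + t * q.1 = 0 := by simpa [homogeneous] using coord 0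
  have h1 : s * p.2 + t * q.2 = 0 := by simpa [homogeneous] using coord 1
  have h2 : s + t = 0 := by simpa [homogeneous] using coord 2
  obtain rfl : t = -s := by linear_combination h2
  have hs : s = 0 := by
    by_contra hs
    exact hpq (Prod.ext (mul_left_cancel₀ hs (by linear_combination h0))
      (mul_left_cancel₀ hs (by linear_combination h1)))
  simp [hs]

lemma span_homogeneous_image_lineThrough (hpq : p ≠ q) :
    span 𝕜 (homogeneous '' lineThrough p q) = span 𝕜 {homogeneous p, homogeneous q} := by
  refine le_antisymm (span_le.2 ?_) (span_mono ?_)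
  · rintro _ ⟨r, hr, rfl⟩
    obtain ⟨t, rfl⟩ := exists_affine_combination_of_mem_lineThrough hpq hr
    refine mem_span_pair.2 ⟨1 - t, t, ?_⟩
    ext i
    fin_cases i <;> simp [homogeneous]
  · exact Set.pair_subset (Set.mem_image_of_mem _ left_mem_lineThrough)
      (Set.mem_image_of_mem _ right_mem_lineThrough)

lemma card_connectingPlanes_homogeneous_le :
    (connectingPlanes 𝕜 P homogeneous).card ≤ (connectingLines P).card := by
  have h : connectingPlanes 𝕜 P homogeneous =
      (connectingLines P).image fun l => span 𝕜 (homogeneous '' l) := by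
    rw [connectingPlanes, connectingLines, Finset.image_image]
    exact Finset.image_congr fun x hx =>
      (span_homogeneous_image_lineThrough (Finset.mem_offDiag.1 hx).2.2).symm
  exact h ▸ Finset.card_image_le

lemma exists_isLine_of_ne_top {H : Submodule 𝕜 (EuclideanSpace 𝕜 (Fin 3))} (hH : H ≠ ⊤) :
    ∃ l, IsLine 𝕜 l ∧ homogeneous ⁻¹' H ⊆ l := by
  obtain ⟨f, hf, hHf⟩ := exists_le_ker_of_lt_top H hH.lt_top
  let e := EuclideanSpace.basisFun (Fin 3) 𝕜
  have f_apply (x) : f x = f (e 0) * x 0 + f (e 1) * x 1 + f (e 2) * x 2 := by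
    conv_lhs => rw [← e.sum_repr x]
    simp [e, Fin.sum_univ_three, mul_comm]
  have f_homogeneous (p) : f (homogeneous p) = f (e 0) * p.1 + f (e 1) * p.2 + f (e 2) := by
    rw [f_apply]
    simp [homogeneous]
  by_cases he : (f (e 0), f (e 1)) = (0, 0)
  · obtain ⟨l, hl, -⟩ := exists_isLine_mem (0 : 𝕜 × 𝕜)
    refine ⟨l, hl, fun p hp => absurd ?_ hf⟩
    have hfp : f (homogeneous p) = 0 := hHf hp
    simp only [Prod.mk.injEq] at he
    simp only [f_homogeneous, he, zero_mul, zero_add] at hfp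
    ext x
    simp [f_apply x, he, hfp]
  · exact ⟨_, ⟨_, _, _, he, rfl⟩, fun p hp => (f_homogeneous p).symm.trans (hHf hp)⟩

theorem beckAlternative_rclike (P : Finset (𝕜 × 𝕜)) : BeckAlternative (1 / 2) (1 / 100) P := by
  rcases exists_proper_submodule_or_card_sq_le_card_connectingPlanes (𝕜 := 𝕜) (P := P)
    (v := homogeneous) (by simp) fun p _ q _ hpq => linearIndependent_homogeneous hpq with
    ⟨H, hH, hcard⟩ | hcard
  · obtain ⟨l, hl, hHl⟩ := exists_isLine_of_ne_top hH
    have hsub : P.filter (homogeneous · ∈ H) ⊆ P.filter (· ∈ l) :=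
      Finset.monotone_filter_right P fun p _ hp => hHl hp
    have : ((P.filter (homogeneous · ∈ H)).card : ℝ) ≤ (P.filter (· ∈ l)).card := by
      exact_mod_cast Finset.card_le_card hsub
    exact Or.inl ⟨l, hl, by linarith⟩
  · have : ((connectingPlanes 𝕜 P homogeneous).card : ℝ) ≤ (connectingLines P).card := by
      exact_mod_cast card_connectingPlanes_homogeneous_le
    exact Or.inr (by linarith)

end Homogeneous

section Transfer

variable {F K : Type} [Field F] [Field K] (φ : F →+* K)

lemma preimage_lineThrough (p q : F × F) :
    Prod.map φ φ ⁻¹' lineThrough (Prod.map φ φ p) (Prod.map φ φ q) = lineThrough p q := by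
  ext r
  simp [lineThrough, ← map_sub, ← map_mul, φ.injective.eq_iff]

lemma IsLine.exists_preimage_eq {l : Set (F × F)} (hl : IsLine F l) :
    ∃ l', IsLine K l' ∧ Prod.map φ φ ⁻¹' l' = l := by
  obtain ⟨a, b, c, hab, rfl⟩ := hl
  refine ⟨_, ⟨φ a, φ b, φ c, by simpa using hab, rfl⟩, ?_⟩
  ext p
  simp [← map_mul, ← map_add]

lemma IsLine.exists_preimage_subset {l : Set (K × K)} (hl : IsLine K l) :
    ∃ l', IsLine F l' ∧ Prod.map φ φ ⁻¹' l ⊆ l' := by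
  rcases (Prod.map φ φ ⁻¹' l).subsingleton_or_nontrivial with h | ⟨p, hp, q, hq, hpq⟩
  · rcases h.eq_empty_or_singleton with h | ⟨p, h⟩
    · obtain ⟨l', hl', -⟩ := exists_isLine_mem (0 : F × F)
      exact ⟨l', hl', by simp [h]⟩
    · obtain ⟨l', hl', hp⟩ := exists_isLine_mem p
      exact ⟨l', hl', by simpa [h] using hp⟩
  · refine ⟨lineThrough p q, isLine_lineThrough hpq, ?_⟩
    rw [hl.eq_lineThrough ((φ.injective.prodMap φ.injective).ne hpq) hp hq, preimage_lineThrough]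

lemma card_filter_image_prodMap (P : Finset (F × F)) (l : Set (K × K)) :
    ((P.image (Prod.map φ φ)).filter (· ∈ l)).card =
      (P.filter (· ∈ Prod.map φ φ ⁻¹' l)).card := by
  rw [Finset.filter_image, Finset.card_image_of_injective _ (φ.injective.prodMap φ.injective)]
  rfl

lemma exists_eq_lineThrough_of_mem_connectingLines_image {P : Finset (F × F)} {l : Set (K × K)}
    (hl : l ∈ connectingLines (P.image (Prod.map φ φ))) :
    ∃ p ∈ P, ∃ q ∈ P, p ≠ q ∧ l = lineThrough (Prod.map φ φ p) (Prod.map φ φ q) := by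
  obtain ⟨hl, p', hp', q', hq', hpq, hpl, hql⟩ := mem_connectingLines.1 hl
  obtain ⟨p, hp, rfl⟩ := Finset.mem_image.1 hp'
  obtain ⟨q, hq, rfl⟩ := Finset.mem_image.1 hq'
  exact ⟨p, hp, q, hq, ne_of_apply_ne _ hpq, hl.eq_lineThrough hpq hpl hql⟩

lemma card_connectingLines_image_prodMap (P : Finset (F × F)) :
    (connectingLines (P.image (Prod.map φ φ))).card = (connectingLines P).card := by
  have hφ : Function.Injective (Prod.map φ φ) := φ.injective.prodMap φ.injective
  refine Finset.card_nbij (Prod.map φ φ ⁻¹' ·) (fun l hl => ?_) (fun l hl l' hl' hll' => ?_)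
    fun l hl => ?_
  · obtain ⟨p, hp, q, hq, hpq, rfl⟩ := exists_eq_lineThrough_of_mem_connectingLines_image φ hl
    simpa only [preimage_lineThrough, Finset.mem_coe] using
      lineThrough_mem_connectingLines hp hq hpq
  · obtain ⟨p, -, q, -, hpq, rfl⟩ := exists_eq_lineThrough_of_mem_connectingLines_image φ hl
    have hpl' : p ∈ Prod.map φ φ ⁻¹' l' := hll'.subset left_mem_lineThrough
    have hql' : q ∈ Prod.map φ φ ⁻¹' l' := hll'.subset right_mem_lineThrough
    exact ((mem_connectingLines.1 hl').1.eq_lineThrough (hφ.ne hpq) hpl' hql').symm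
  · obtain ⟨⟨p, q⟩, hpq, rfl⟩ := Finset.mem_image.1 hl
    obtain ⟨hp, hq, hpq⟩ := Finset.mem_offDiag.1 hpq
    exact ⟨_, lineThrough_mem_connectingLines (Finset.mem_image_of_mem _ hp)
      (Finset.mem_image_of_mem _ hq) (hφ.ne hpq), preimage_lineThrough φ p q⟩

lemma beckAlternative_image_iff {c c' : ℝ} {P : Finset (F × F)} :
    BeckAlternative c c' (P.image (Prod.map φ φ)) ↔ BeckAlternative c c' P := by
  simp only [BeckAlternative, card_connectingLines_image_prodMap, card_filter_image_prodMap,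
    Finset.card_image_of_injective P (φ.injective.prodMap φ.injective)]
  refine or_congr_left ⟨?_, ?_⟩
  · rintro ⟨l, hl, hcard⟩
    obtain ⟨l', hl', hsub⟩ := hl.exists_preimage_subset φ
    refine ⟨l', hl', hcard.trans ?_⟩
    gcongr
  · rintro ⟨l, hl, hcard⟩
    obtain ⟨l', hl', rfl⟩ := hl.exists_preimage_eq φ
    exact ⟨l', hl', hcard⟩

end Transfer

lemma exists_subfield_image_eq {K : Type*} [Field K] (P : Finset (K × K)) :
    ∃ F : Subfield K, #F ≤ ℵ₀ ∧
      ∃ P₀ : Finset (F × F), P₀.image (Prod.map F.subtype F.subtype) = P := by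
  let coords : Finset K := P.image Prod.fst ∪ P.image Prod.snd
  let F := Subfield.closure (coords : Set K)
  have hF : #F ≤ ℵ₀ := (Subfield.cardinalMk_closure_le_max _).trans
    (max_le coords.countable_toSet.le_aleph0 le_rfl)
  have hmem (x) (hx : x ∈ coords) : x ∈ F := Subfield.subset_closure hx
  refine ⟨F, hF, ?_⟩
  have hP : (P : Set (K × K)) ⊆ Prod.map F.subtype F.subtype '' Set.univ := fun p hp =>
    ⟨(⟨p.1, hmem _ (Finset.mem_union_left _ (Finset.mem_image_of_mem _ hp))⟩,
      ⟨p.2, hmem _ (Finset.mem_union_right _ (Finset.mem_image_of_mem _ hp))⟩), trivial, rfl⟩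
  obtain ⟨P₀, -, hP₀⟩ := Finset.subset_set_image_iff.1 hP
  exact ⟨P₀, hP₀⟩

-- An algebraic closure of `F(xᵣ : r ∈ ℝ)` has the cardinality of `ℂ`, hence is isomorphic to `ℂ`.
lemma exists_ringHom_complex {F : Type*} [Field F] [CharZero F] (hF : #F ≤ 𝔠) :
    Nonempty (F →+* ℂ) := by
  let R := FractionRing (MvPolynomial ℝ F)
  let M := AlgebraicClosure R
  have : CharZero R :=
    charZero_of_injective_algebraMap (R := MvPolynomial ℝ F) (IsFractionRing.injective _ _)
  have : CharZero M := charZero_of_injective_algebraMap (algebraMap R M).injective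
  have hR : #R = 𝔠 := by
    rw [FractionRing.cardinalMk, MvPolynomial.cardinalMk_eq_max_lift, mk_real, lift_uzero,
      lift_continuum, max_eq_right hF, max_eq_left aleph0_le_continuum]
  have hM : #M = 𝔠 := by
    refine le_antisymm ?_ (hR ▸ mk_le_of_injective (algebraMap R M).injective)
    exact (Algebra.IsAlgebraic.cardinalMk_le_max R M).trans
      (by rw [hR, max_eq_left aleph0_le_continuum])
  have hM_equiv : Nonempty (M ≃ ℂ) := lift_mk_eq'.1 (by simp [hM])
  obtain ⟨e⟩ := IsAlgClosed.ringEquiv_of_equiv_of_charZero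
    (aleph0_lt_continuum.trans_eq hM.symm) hM_equiv
  exact ⟨(e : M →+* ℂ).comp ((algebraMap R M).comp
    ((algebraMap (MvPolynomial ℝ F) R).comp MvPolynomial.C))⟩

/-- Beck's theorem over characteristic-zero fields. -/
theorem stmt8 :
    ∃ c c' : ℝ, 0 < c ∧ 0 < c' ∧
      ∀ (K : Type) [Field K] [CharZero K],
        ∀ P : Finset (K × K),
          (∃ l : Set (K × K), IsLine K l ∧
            c * (P.card : ℝ) ≤ ((P.filter (fun p => p ∈ l)).card : ℝ)) ∨
          c' * (P.card : ℝ) ^ 2 ≤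
            (Nat.card {l : Set (K × K) // IsLine K l ∧
              ∃ p ∈ P, ∃ q ∈ P, p ≠ q ∧ p ∈ l ∧ q ∈ l} : ℝ) := by
  refine ⟨1 / 2, 1 / 100, by norm_num, by norm_num, fun K _ _ P => ?_⟩
  obtain ⟨F, hF, P₀, rfl⟩ := exists_subfield_image_eq P
  obtain ⟨φ⟩ := exists_ringHom_complex (hF.trans aleph0_le_continuum)
  have hP₀ : BeckAlternative (1 / 2) (1 / 100) P₀ :=
    (beckAlternative_image_iff φ).1 (beckAlternative_rclike _)
  rw [natCard_isLine_eq_card_connectingLines]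
  exact (beckAlternative_image_iff F.subtype).2 hP₀
end

section
/- Sum-product estimate over characteristic-zero fields: there is an absolute constant c > 0 such that for every field K of characteristic zero and every finite nonempty subset A ⊆ K, max{|A + A|, |A · A|} ≥ c·|A|^{14/11}. -/
open scoped Classical Pointwise

/-!
The argument is Solymosi's, in the form Konyagin and Rudnev gave it over `ℂ`; it yields every
exponent below `4 / 3`. Cauchy–Schwarz bounds `|A|⁴` by `|A · A|` times the multiplicative energy
of `A`, which is at most the sum of `|P_m|²` over slopes `m`, where `P_m` is the set of points of
`A × A` on the line `y = m x`. To bound the number of lines with `|P_m| ≥ t`, pair each slope `m`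
with a nearest other slope `m'`: the sum set `P_m + P_{m'} ⊆ (A + A)²` has at least `t²` elements.
If adding two elements of `A` never shortens them, then a point of `P_m + P_{m'}` has slope no
farther from `m` than `m'` is, and a packing bound shows that boundedly many of these sum sets
share a point. Any finite set of scalars has a positive proportion inside a narrow cone, where the
norm condition holds. Finally, a finite subset of a domain of characteristic zero lies in a
countable subring, which embeds into `ℂ`.
-/

namespace SumProduct

open Finset NormedSpace

section NormedSpace

variable {E : Type*} [NormedAddCommGroup E] [NormedSpace ℝ E]

lemma norm_normalize_le_one (x : E) : ‖normalize x‖ ≤ 1 := by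
  rcases eq_or_ne x 0 with rfl | hx
  · simp
  · exact (norm_normalize hx).le

lemma one_le_norm_normalize_sub_normalize {x y : E} (hx : x ≠ 0) (hxy : ‖x‖ ≤ ‖y‖)
    (h : ‖y‖ ≤ ‖x - y‖) : 1 ≤ ‖normalize x - normalize y‖ := by
  have hdecomp : x - y = ‖x‖ • (normalize x - normalize y) - (‖y‖ - ‖x‖) • normalize y := by
    rw [smul_sub, sub_smul, norm_smul_normalize, norm_smul_normalize]
    abel
  have hle : ‖x - y‖ ≤ ‖x‖ * ‖normalize x - normalize y‖ + (‖y‖ - ‖x‖) := calc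
    ‖x - y‖ ≤ ‖x‖ * ‖normalize x - normalize y‖ + (‖y‖ - ‖x‖) * ‖normalize y‖ := by
      rw [hdecomp]
      refine (norm_sub_le _ _).trans_eq ?_
      rw [norm_smul, norm_smul, norm_norm, Real.norm_of_nonneg (sub_nonneg.2 hxy)]
    _ ≤ ‖x‖ * ‖normalize x - normalize y‖ + (‖y‖ - ‖x‖) := by
      gcongr
      exact mul_le_of_le_one_right (sub_nonneg.2 hxy) (norm_normalize_le_one y)
  exact le_of_mul_le_mul_left (by linarith) (norm_pos_iff.2 hx)

lemma card_le_multiplicity_of_dist_le [FiniteDimensional ℝ E] (T : Finset E) (z : E)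
    (hT : ∀ w ∈ T, ∀ w' ∈ T, w ≠ w' → dist w z ≤ dist w w') :
    #T ≤ Besicovitch.multiplicity E := by
  let dir : E → E := fun w => normalize (w - z)
  have hsep : ∀ w ∈ T, ∀ w' ∈ T, w ≠ w' → 1 ≤ ‖dir w - dir w'‖ := by
    intro w hw w' hw' hne
    wlog hle : ‖w - z‖ ≤ ‖w' - z‖ generalizing w w'
    · rw [norm_sub_rev]
      exact this w' hw' w hw hne.symm (le_of_not_ge hle)
    rcases eq_or_ne w z with rfl | hwz
    · simp [dir, norm_normalize (sub_ne_zero.2 hne.symm)]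
    · refine one_le_norm_normalize_sub_normalize (sub_ne_zero.2 hwz) hle ?_
      rw [sub_sub_sub_cancel_right, ← dist_eq_norm, ← dist_eq_norm, dist_comm w]
      exact hT w' hw' w hw hne.symm
  have hinj : Set.InjOn dir T := by
    intro w hw w' hw' h
    by_contra hne
    have := hsep w hw w' hw' hne
    norm_num [h] at this
  rw [← card_image_of_injOn hinj]
  refine Besicovitch.card_le_multiplicity ?_ ?_
  · simp only [forall_mem_image]
    exact fun w _ => (norm_normalize_le_one _).trans one_le_two
  · simp only [forall_mem_image]
    exact fun w hw w' hw' hne => hsep w hw w' hw' (ne_of_apply_ne dir hne)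

/-- A finite set of vectors is aligned if the sum of two of its members is never shorter than
either of them. For sums of points on lines through the origin this plays the part that positivity
plays over `ℝ`. -/
def IsAligned (A : Finset E) : Prop := ∀ a ∈ A, ∀ b ∈ A, ‖b‖ ≤ ‖a + b‖

lemma norm_le_norm_add_of_norm_normalize_sub_le_one {a b : E}
    (h : ‖normalize a - normalize b‖ ≤ 1) : ‖b‖ ≤ ‖a + b‖ := by
  rcases eq_or_ne b 0 with rfl | hb
  · simp
  have hdecomp : (‖a‖ + ‖b‖) • normalize b = (a + b) - ‖a‖ • (normalize a - normalize b) := by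
    rw [smul_sub, add_smul, norm_smul_normalize, norm_smul_normalize]
    abel
  have hle : ‖a‖ + ‖b‖ ≤ ‖a + b‖ + ‖a‖ := calc
    ‖a‖ + ‖b‖ = ‖(‖a‖ + ‖b‖) • normalize b‖ := by
      rw [norm_smul, norm_normalize hb, mul_one, Real.norm_of_nonneg (by positivity)]
    _ ≤ ‖a + b‖ + ‖a‖ * ‖normalize a - normalize b‖ := by
      rw [hdecomp]
      refine (norm_sub_le _ _).trans_eq ?_
      rw [norm_smul, norm_norm]
    _ ≤ ‖a + b‖ + ‖a‖ := by
      gcongr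
      exact mul_le_of_le_one_right (norm_nonneg a) h
  linarith

variable (E) in
lemma exists_isAligned_subset [FiniteDimensional ℝ E] :
    ∃ k : ℕ, ∀ A : Finset E, 0 ∉ A → ∃ B ⊆ A, IsAligned B ∧ #A ≤ k * #B := by
  obtain ⟨t, -, htfin, hcover⟩ :=
    (isCompact_sphere (0 : E) 1).finite_cover_balls (e := 1 / 2) (by norm_num)
  lift t to Finset E using htfin
  refine ⟨#t, fun A hA => ?_⟩
  let cone : E → Finset E := fun c => {a ∈ A | normalize a ∈ Metric.ball c (1 / 2)}
  have hsub : A ⊆ t.biUnion cone := by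
    intro a ha
    have hnorm : normalize a ∈ Metric.sphere (0 : E) 1 :=
      mem_sphere_zero_iff_norm.2 (norm_normalize (ne_of_mem_of_not_mem ha hA))
    obtain ⟨c, hc, hac⟩ := Set.mem_iUnion₂.1 (hcover hnorm)
    exact mem_biUnion.2 ⟨c, hc, mem_filter.2 ⟨ha, hac⟩⟩
  have haligned : ∀ c, IsAligned (cone c) := by
    intro c a ha b hb
    have hac := Metric.mem_ball.1 (mem_filter.1 ha).2
    have hbc := Metric.mem_ball.1 (mem_filter.1 hb).2
    refine norm_le_norm_add_of_norm_normalize_sub_le_one ?_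
    rw [← dist_eq_norm]
    linarith [dist_triangle_right (normalize a) (normalize b) c]
  rcases t.eq_empty_or_nonempty with rfl | ht
  · exact ⟨∅, empty_subset A, fun a ha => absurd ha (notMem_empty a), by simpa using hsub⟩
  obtain ⟨c, -, hmax⟩ := t.exists_max_image (fun c => #(cone c)) ht
  exact ⟨cone c, filter_subset _ _, haligned c,
    (card_le_card hsub).trans (card_biUnion_le_card_mul _ _ _ hmax)⟩

end NormedSpace

section PointsOnLine

variable {K : Type*} [Field K] [DecidableEq K] {A : Finset K}

/-- The points of `A × A` on the line through the origin with slope `m`. Their number,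
as a function of `m`, is what controls the multiplicative energy of `A`. -/
def pointsOnLine (A : Finset K) (m : K) : Finset (K × K) := {p ∈ A ×ˢ A | p.2 = m * p.1}

lemma mem_pointsOnLine {m : K} {p : K × K} :
    p ∈ pointsOnLine A m ↔ (p.1 ∈ A ∧ p.2 ∈ A) ∧ p.2 = m * p.1 := by
  rw [pointsOnLine, mem_filter, mem_product]

lemma card_pointsOnLine_le (A : Finset K) (m : K) : #(pointsOnLine A m) ≤ #A := by
  refine card_le_card_of_injOn Prod.fst (fun p hp => (mem_pointsOnLine.1 hp).1.1) ?_
  intro p hp q hq h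
  exact Prod.ext h <| by
    rw [(mem_pointsOnLine.1 hp).2, (mem_pointsOnLine.1 hq).2, h]

lemma pointsOnLine_add_pointsOnLine_subset (A : Finset K) (m m' : K) :
    pointsOnLine A m + pointsOnLine A m' ⊆ (A + A) ×ˢ (A + A) := by
  rw [← product_add_product_comm]
  exact add_subset_add (filter_subset _ _) (filter_subset _ _)

lemma card_pointsOnLine_add_pointsOnLine (A : Finset K) {m m' : K} (hne : m ≠ m') :
    #(pointsOnLine A m + pointsOnLine A m') = #(pointsOnLine A m) * #(pointsOnLine A m') := by
  rw [card_add_iff]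
  rintro ⟨⟨x, y⟩, ⟨x', y'⟩⟩ ⟨hp, hp'⟩ ⟨⟨u, v⟩, ⟨u', v'⟩⟩ ⟨hq, hq'⟩ h
  obtain rfl : y = m * x := (mem_pointsOnLine.1 hp).2
  obtain rfl : y' = m' * x' := (mem_pointsOnLine.1 hp').2
  obtain rfl : v = m * u := (mem_pointsOnLine.1 hq).2
  obtain rfl : v' = m' * u' := (mem_pointsOnLine.1 hq').2
  simp only [Prod.mk_add_mk, Prod.mk.injEq] at h
  obtain rfl : x = u :=
    mul_left_cancel₀ (sub_ne_zero.2 hne) (by linear_combination h.2 - m' * h.1)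
  obtain rfl : x' = u' := add_left_cancel h.1
  rfl

lemma mulEnergy_le_sum_sq_card_pointsOnLine (hA : 0 ∉ A) :
    mulEnergy A A ≤ ∑ m ∈ A / A, #(pointsOnLine A m) ^ 2 := by
  let toLine : (K × K) × K × K → Σ _ : K, (K × K) × K × K :=
    fun x => ⟨x.1.1 / x.1.2, (x.1.2, x.1.1), x.2⟩
  calc mulEnergy A A
      ≤ #((A / A).sigma fun m => pointsOnLine A m ×ˢ pointsOnLine A m) := by
        refine card_le_card_of_injOn toLine ?_ ?_
        · rintro ⟨⟨a, b⟩, c, d⟩ hx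
          simp only [coe_filter, mem_product, Set.mem_ofPred_eq] at hx
          obtain ⟨⟨⟨ha, hb⟩, hc, hd⟩, h⟩ := hx
          have hb0 : b ≠ 0 := ne_of_mem_of_not_mem hb hA
          have had : d = a / b * c := by
            rw [div_mul_eq_mul_div, eq_div_iff hb0, mul_comm d, h]
          exact mem_sigma.2 ⟨div_mem_div ha hb, mem_product.2
            ⟨mem_pointsOnLine.2 ⟨⟨hb, ha⟩, (div_mul_cancel₀ a hb0).symm⟩,
              mem_pointsOnLine.2 ⟨⟨hc, hd⟩, had⟩⟩⟩
        · rintro ⟨⟨a, b⟩, c, d⟩ - ⟨⟨a', b'⟩, c', d'⟩ - h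
          simp_all [toLine]
    _ = ∑ m ∈ A / A, #(pointsOnLine A m) ^ 2 := by simp only [card_sigma, card_product, sq]

end PointsOnLine

lemma exists_forall_dist_le {X : Type*} [PseudoMetricSpace X] {L : Finset X} (hL : L.Nontrivial)
    (m : X) : ∃ q ∈ L, q ≠ m ∧ ∀ m' ∈ L, m' ≠ m → dist m q ≤ dist m m' := by
  obtain ⟨q, hq, hmin⟩ := exists_min_image (L.erase m) (dist m) (hL.erase_nonempty)
  exact ⟨q, mem_of_mem_erase hq, ne_of_mem_erase hq,
    fun m' hm' hne => hmin m' (mem_erase.2 ⟨hne, hm'⟩)⟩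

lemma sum_sq_le_mul_harmonic {ι : Type*} {L : Finset ι} {f : ι → ℕ} {N : ℕ} {C : ℝ}
    (hN : ∀ i ∈ L, f i ≤ N) (hC : ∀ t : ℕ, (#{i ∈ L | t ≤ f i} : ℝ) * (t : ℝ) ^ 2 ≤ C) :
    ∑ i ∈ L, (f i : ℝ) ^ 2 ≤ 2 * C * harmonic N := by
  have hodd : ∀ n : ℕ, (n : ℝ) ^ 2 = ∑ t ∈ range n, (2 * (t : ℝ) + 1) := by
    intro n
    induction n with
    | zero => simp
    | succ n ih =>
      rw [sum_range_succ, ← ih]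
      push_cast
      ring
  calc ∑ i ∈ L, (f i : ℝ) ^ 2
      = ∑ t ∈ range N, ∑ i ∈ L with t + 1 ≤ f i, (2 * (t : ℝ) + 1) := by
        simp only [hodd]
        refine sum_comm' fun i t => ?_
        simp only [mem_range, mem_filter]
        exact ⟨fun ⟨hi, ht⟩ => ⟨⟨hi, ht⟩, ht.trans_le (hN i hi)⟩, fun h => h.1⟩
    _ ≤ ∑ t ∈ range N, 2 * C * ((t + 1 : ℕ) : ℝ)⁻¹ := by
        refine sum_le_sum fun t _ => ?_
        rw [sum_const, nsmul_eq_mul, ← div_eq_mul_inv, le_div_iff₀ (by positivity)]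
        have hcard := hC (t + 1)
        have h0 : (0 : ℝ) ≤ #{i ∈ L | t + 1 ≤ f i} * ((t : ℝ) + 1) := by positivity
        push_cast at hcard ⊢
        linarith
    _ = 2 * C * harmonic N := by
        rw [harmonic, ← mul_sum]
        push_cast
        rfl

section NormedField

variable {𝕜 : Type*} [NormedField 𝕜] [DecidableEq 𝕜] {A : Finset 𝕜}

lemma dist_slope_le_of_mem_pointsOnLine_add_pointsOnLine (h0 : 0 ∉ A) (hA : IsAligned A)
    {m m' : 𝕜} {p : 𝕜 × 𝕜} (hp : p ∈ pointsOnLine A m + pointsOnLine A m') :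
    dist m (p.2 / p.1) ≤ dist m m' := by
  obtain ⟨⟨a, y⟩, hay, ⟨b, z⟩, hbz, rfl⟩ := mem_add.1 hp
  obtain rfl : y = m * a := (mem_pointsOnLine.1 hay).2
  obtain rfl : z = m' * b := (mem_pointsOnLine.1 hbz).2
  have ha : a ∈ A := (mem_pointsOnLine.1 hay).1.1
  have hb : b ∈ A := (mem_pointsOnLine.1 hbz).1.1
  have hle : ‖b‖ ≤ ‖a + b‖ := hA a ha b hb
  have hpos : 0 < ‖a + b‖ := (norm_pos_iff.2 (ne_of_mem_of_not_mem hb h0)).trans_le hle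
  have hab : a + b ≠ 0 := norm_pos_iff.1 hpos
  have hslope : m - (m * a + m' * b) / (a + b) = (m - m') * (b / (a + b)) := by
    field_simp
    ring
  simp only [Prod.mk_add_mk]
  rw [dist_eq_norm, dist_eq_norm, hslope, norm_mul, norm_div]
  exact mul_le_of_le_one_right (norm_nonneg _) ((div_le_one hpos).2 hle)

variable [NormedSpace ℝ 𝕜] [FiniteDimensional ℝ 𝕜]

lemma card_filter_mem_pointsOnLine_add_pointsOnLine_le (h0 : 0 ∉ A) (hA : IsAligned A)
    {L : Finset 𝕜} {f : 𝕜 → 𝕜} (hf : ∀ m ∈ L, ∀ m' ∈ L, m' ≠ m → dist m (f m) ≤ dist m m')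
    (p : 𝕜 × 𝕜) :
    #{m ∈ L | p ∈ pointsOnLine A m + pointsOnLine A (f m)} ≤ Besicovitch.multiplicity 𝕜 := by
  refine card_le_multiplicity_of_dist_le _ (p.2 / p.1) fun m hm m' hm' hne => ?_
  calc dist m (p.2 / p.1) ≤ dist m (f m) :=
        dist_slope_le_of_mem_pointsOnLine_add_pointsOnLine h0 hA (mem_filter.1 hm).2
    _ ≤ dist m m' := hf m (mem_filter.1 hm).1 m' (mem_filter.1 hm').1 hne.symm

lemma card_mul_sq_le_of_le_card_pointsOnLine (h0 : 0 ∉ A) (hA : IsAligned A) {L : Finset 𝕜}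
    {t : ℕ} (ht : ∀ m ∈ L, t ≤ #(pointsOnLine A m)) :
    #L * t ^ 2 ≤ Besicovitch.multiplicity 𝕜 * #(A + A) ^ 2 := by
  rcases L.eq_empty_or_nonempty with rfl | ⟨m, hm⟩
  · simp
  rcases (L : Set 𝕜).subsingleton_or_nontrivial with hL | hL
  · have hcard : #L ≤ Besicovitch.multiplicity 𝕜 :=
      card_le_multiplicity_of_dist_le L 0 fun w hw w' hw' hne => absurd (hL hw hw') hne
    have htA : t ≤ #(A + A) :=
      (ht m hm).trans ((card_pointsOnLine_le A m).trans card_le_card_add_self)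
    gcongr
  · choose f hfL hfne hf using exists_forall_dist_le hL
    calc #L * t ^ 2 ≤ #((A + A) ×ˢ (A + A)) * Besicovitch.multiplicity 𝕜 := by
          refine card_mul_le_card_mul (fun m p => p ∈ pointsOnLine A m + pointsOnLine A (f m))
            (fun m hm => ?_) fun p _ =>
              card_filter_mem_pointsOnLine_add_pointsOnLine_le h0 hA (fun m _ => hf m) p
          rw [bipartiteAbove, filter_mem_eq_inter,
            inter_eq_right.2 (pointsOnLine_add_pointsOnLine_subset A m (f m)),
            card_pointsOnLine_add_pointsOnLine A (hfne m).symm, sq]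
          exact Nat.mul_le_mul (ht m hm) (ht (f m) (hfL m))
      _ = Besicovitch.multiplicity 𝕜 * #(A + A) ^ 2 := by rw [card_product, sq, mul_comm]

lemma IsAligned.card_pow_four_le (hA : IsAligned A) (h0 : 0 ∉ A) :
    (#A : ℝ) ^ 4 ≤ 2 * Besicovitch.multiplicity 𝕜 *
      ((#(A + A) : ℝ) ^ 2 * #(A * A) * (1 + Real.log #A)) := by
  have henergy : #A ^ 2 * #A ^ 2 ≤ #(A * A) * ∑ m ∈ A / A, #(pointsOnLine A m) ^ 2 :=
    (le_card_mul_mul_mulEnergy A A).trans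
      (Nat.mul_le_mul_left _ (mulEnergy_le_sum_sq_card_pointsOnLine h0))
  have hsum : ∑ m ∈ A / A, (#(pointsOnLine A m) : ℝ) ^ 2 ≤
      2 * (Besicovitch.multiplicity 𝕜 * (#(A + A) : ℝ) ^ 2) * harmonic #A := by
    refine sum_sq_le_mul_harmonic (fun m _ => card_pointsOnLine_le A m) fun t => ?_
    exact_mod_cast card_mul_sq_le_of_le_card_pointsOnLine h0 hA fun m hm => (mem_filter.1 hm).2
  calc (#A : ℝ) ^ 4 = (#A : ℝ) ^ 2 * (#A : ℝ) ^ 2 := by ring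
    _ ≤ #(A * A) * ∑ m ∈ A / A, (#(pointsOnLine A m) : ℝ) ^ 2 := by exact_mod_cast henergy
    _ ≤ #(A * A) *
        (2 * (Besicovitch.multiplicity 𝕜 * (#(A + A) : ℝ) ^ 2) * (1 + Real.log #A)) := by
      gcongr
      exact hsum.trans (by gcongr; exact harmonic_le_one_add_log _)
    _ = _ := by ring

variable (𝕜) in
lemma exists_card_pow_four_le :
    ∃ C : ℝ, 0 < C ∧ ∀ A : Finset 𝕜, A.Nonempty →
      (#A : ℝ) ^ 4 ≤ C * ((#(A + A) : ℝ) ^ 2 * #(A * A) * (1 + Real.log #A)) := by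
  obtain ⟨k, hk⟩ := exists_isAligned_subset 𝕜
  let N : ℝ := Besicovitch.multiplicity 𝕜
  refine ⟨max 1 ((2 * k) ^ 4 * (2 * N)), by positivity, fun A hA => ?_⟩
  rcases hA.exists_eq_singleton_or_nontrivial with ⟨a, rfl⟩ | hA
  · simp
  obtain ⟨B, hB, haligned, hcard⟩ := hk (A.erase 0) (notMem_erase 0 A)
  have hBA : B ⊆ A := hB.trans (erase_subset 0 A)
  have hAB : #A ≤ 2 * k * #B := by
    have h1 : 1 < #A := one_lt_card_iff_nontrivial.2 hA
    have h2 : #A - 1 ≤ #(A.erase 0) := pred_card_le_card_erase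
    rw [mul_assoc]
    omega
  have hBpos : 0 < #B := by
    by_contra! hB0
    rw [Nat.le_zero.1 hB0, mul_zero] at hAB
    exact hA.nonempty.card_pos.not_ge hAB
  calc (#A : ℝ) ^ 4 ≤ (2 * k * #B : ℝ) ^ 4 := by gcongr; exact_mod_cast hAB
    _ = (2 * k) ^ 4 * (#B : ℝ) ^ 4 := by ring
    _ ≤ (2 * k) ^ 4 * (2 * N * ((#(B + B) : ℝ) ^ 2 * #(B * B) * (1 + Real.log #B))) := by
      gcongr
      exact haligned.card_pow_four_le fun h => notMem_erase 0 A (hB h)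
    _ ≤ (2 * k) ^ 4 * (2 * N * ((#(A + A) : ℝ) ^ 2 * #(A * A) * (1 + Real.log #A))) := by
      gcongr
    _ ≤ _ := by
      rw [← mul_assoc]
      gcongr
      exact le_max_right _ _

end NormedField

section Embedding

universe u

open Cardinal in
lemma exists_injective_ringHom_complex (R : Type u) [CommRing R] [IsDomain R] [CharZero R]
    (hR : #R ≤ 𝔠) : ∃ φ : R →+* ℂ, Function.Injective φ := by
  -- Continuum many indeterminates bring the cardinality to exactly `𝔠`, so that Steinitz's
  -- classification identifies the algebraic closure `E` with `ℂ`.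
  let P := MvPolynomial ℝ R
  let F := FractionRing P
  let E := AlgebraicClosure F
  let i : R →+* E := (algebraMap F E).comp ((algebraMap P F).comp MvPolynomial.C)
  have hFE : Function.Injective (algebraMap F E) := (algebraMap F E).injective
  have hi : Function.Injective i :=
    hFE.comp ((IsFractionRing.injective P F).comp (MvPolynomial.C_injective ℝ R))
  have hF : #F = 𝔠 := by
    rw [mk_fractionRing, MvPolynomial.cardinalMk_eq_max_lift, mk_real, lift_continuum,
      lift_id'.{0, u}, max_eq_right hR, max_eq_left aleph0_le_continuum]
  have hE : #E = 𝔠 := by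
    refine le_antisymm ?_ (hF ▸ mk_le_of_injective hFE)
    refine (Algebra.IsAlgebraic.cardinalMk_le_max F E).trans ?_
    rw [hF, max_eq_left aleph0_le_continuum]
  have : CharZero E := charZero_of_injective_ringHom hi
  obtain ⟨e⟩ := IsAlgClosed.ringEquiv_of_equiv_of_charZero (K := E) (L := ℂ)
    (hE ▸ aleph0_lt_continuum)
    (lift_mk_eq'.1 (by rw [hE, mk_complex, lift_continuum, lift_continuum]))
  exact ⟨e.toRingHom.comp i, e.injective.comp hi⟩

lemma countable_adjoin {k R : Type*} [CommSemiring k] [Countable k] [Semiring R] [Algebra k R]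
    {s : Set R} (hs : s.Countable) : Countable (Algebra.adjoin k s) := by
  have := hs.to_subtype
  rw [← Cardinal.mk_le_aleph0_iff, ← Cardinal.lift_le_aleph0]
  refine (Algebra.lift_cardinalMk_adjoin_le k s).trans ?_
  simp

lemma exists_complex_finset_card_eq {R : Type u} [CommRing R] [IsDomain R] [CharZero R]
    [DecidableEq R] (A : Finset R) :
    ∃ B : Finset ℂ, #B = #A ∧ #(B + B) = #(A + A) ∧ #(B * B) = #(A * A) := by
  let S := Algebra.adjoin ℤ (A : Set R)
  have : Countable S := countable_adjoin A.countable_toSet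
  obtain ⟨φ, hφ⟩ := exists_injective_ringHom_complex S
    (Cardinal.mk_le_aleph0.trans Cardinal.aleph0_le_continuum)
  have hval : Function.Injective S.val := Subtype.val_injective
  have hA : (A : Set R) ⊆ Set.range S.val := by
    intro a ha
    exact ⟨⟨a, Algebra.subset_adjoin ha⟩, rfl⟩
  obtain ⟨B, hB⟩ : ∃ B : Finset S, B.image S.val = A :=
    let ⟨B, _, hB⟩ := subset_set_image_iff.1 (Set.image_univ ▸ hA)
    ⟨B, hB⟩
  rw [← hB]
  refine ⟨B.image φ, ?_, ?_, ?_⟩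
  · rw [card_image_of_injective _ hφ, card_image_of_injective _ hval]
  · rw [← image_add, ← image_add, card_image_of_injective _ hφ, card_image_of_injective _ hval]
  · rw [← image_mul, ← image_mul, card_image_of_injective _ hφ, card_image_of_injective _ hval]

end Embedding

lemma one_add_log_le_mul_rpow {x ε : ℝ} (hx : 1 ≤ x) (hε : 0 < ε) :
    1 + Real.log x ≤ (1 + ε⁻¹) * x ^ ε := by
  have hlog : Real.log x ≤ x ^ ε / ε := Real.log_le_rpow_div (by linarith) hε
  have hone : 1 ≤ x ^ ε := Real.one_le_rpow hx hε.le
  calc 1 + Real.log x ≤ x ^ ε + x ^ ε / ε := add_le_add hone hlog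
    _ = (1 + ε⁻¹) * x ^ ε := by ring

lemma exists_rpow_le_mul_of_pow_four_le {s : ℝ} (hs : s < 4 / 3) {C : ℝ} (hC : 0 ≤ C) :
    ∃ D : ℝ, 0 < D ∧ ∀ x M : ℝ, 1 ≤ x → 0 ≤ M →
      x ^ 4 ≤ C * (M ^ 3 * (1 + Real.log x)) → x ^ s ≤ D * M := by
  let ε := 4 - 3 * s
  have hε : 0 < ε := by simp only [ε]; linarith
  let D := max 1 (C * (1 + ε⁻¹))
  have hD : 1 ≤ D := le_max_left _ _
  refine ⟨D, by linarith, fun x M hx hM h => ?_⟩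
  have hx0 : 0 < x := by linarith
  have hsplit : x ^ 4 = (x ^ s) ^ 3 * x ^ ε := by
    rw [← Real.rpow_mul_natCast hx0.le, ← Real.rpow_add hx0, ← Real.rpow_natCast]
    congr 1
    simp only [ε]
    push_cast
    ring
  have hmul : (x ^ s) ^ 3 * x ^ ε ≤ D * M ^ 3 * x ^ ε := calc
    (x ^ s) ^ 3 * x ^ ε ≤ C * (M ^ 3 * (1 + Real.log x)) := hsplit ▸ h
    _ ≤ C * (M ^ 3 * ((1 + ε⁻¹) * x ^ ε)) := by
      gcongr
      exact one_add_log_le_mul_rpow hx hε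
    _ = C * (1 + ε⁻¹) * M ^ 3 * x ^ ε := by ring
    _ ≤ D * M ^ 3 * x ^ ε := by
      gcongr
      exact le_max_right _ _
  refine le_of_pow_le_pow_left₀ three_ne_zero (by positivity) ?_
  calc (x ^ s) ^ 3 ≤ D * M ^ 3 := le_of_mul_le_mul_right hmul (Real.rpow_pos_of_pos hx0 ε)
    _ ≤ D ^ 3 * M ^ 3 := by
      gcongr
      exact le_self_pow₀ hD three_ne_zero
    _ = (D * M) ^ 3 := (mul_pow D M 3).symm

end SumProduct

open Finset SumProduct in
theorem stmt9_general {s : ℝ} (hs : s < 4 / 3) :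
    ∃ c : ℝ, 0 < c ∧
      ∀ (R : Type*) [CommRing R] [IsDomain R] [CharZero R],
        ∀ A : Finset R, A.Nonempty →
          c * (#A : ℝ) ^ s ≤ (max #(A + A) #(A * A) : ℝ) := by
  obtain ⟨C, hC, hpow⟩ := exists_card_pow_four_le ℂ
  obtain ⟨D, hD, hle⟩ := exists_rpow_le_mul_of_pow_four_le hs hC.le
  refine ⟨D⁻¹, inv_pos.2 hD, fun R _ _ _ A hA => ?_⟩
  obtain ⟨B, hcard, hadd, hmul⟩ := exists_complex_finset_card_eq A
  rw [← hcard, ← hadd, ← hmul, inv_mul_le_iff₀ hD]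
  have hB : 0 < #B := hcard ▸ hA.card_pos
  set M : ℝ := max #(B + B) #(B * B)
  refine hle #B M (by exact_mod_cast hB) (by positivity) ?_
  calc (#B : ℝ) ^ 4 ≤ C * ((#(B + B) : ℝ) ^ 2 * #(B * B) * (1 + Real.log #B)) :=
        hpow B (card_pos.1 hB)
    _ ≤ C * (M ^ 2 * M * (1 + Real.log #B)) := by
      gcongr
      · exact le_max_left _ _
      · exact le_max_right _ _
    _ = C * (M ^ 3 * (1 + Real.log #B)) := by ring

/-- Sum-product estimate over characteristic-zero fields. -/
theorem stmt9 :
    ∃ c : ℝ, 0 < c ∧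
      ∀ (K : Type) [Field K] [CharZero K],
        ∀ A : Finset K, A.Nonempty →
          c * (A.card : ℝ) ^ ((14 : ℝ) / 11) ≤
            (max (A + A).card (A * A).card : ℝ) := by
  obtain ⟨c, hc, h⟩ := stmt9_general (s := 14 / 11) (by norm_num)
  exact ⟨c, hc, fun K _ _ => h K⟩
end
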